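/- Let P_1, …, P_m ∈ ℤ[y]_0 be linearly independent over ℚ. Then there exist constants c, γ, C > 0 (depending only on P_1, …, P_m) such that for every finite field 𝔽_q whose characteristic is at least c, one has r_{P_1,…,P_m}(𝔽_q) ≤ C·q^{1−γ}. -/

import Mathlib

set_option linter.all false
open Polynomial
open scoped BigOperators ComplexConjugate


namespace Pel

section basics
variable {F : Type} [Field F] [Fintype F]

lemma expect_pow_le' (f : F → ℝ) (hf : ∀ x, 0 ≤ f x) (n : ℕ) :
    (𝔼 x, f x) ^ n ≤ 𝔼 x, f x ^ n := by
  have h := Real.pow_arith_mean_le_arith_mean_pow (Finset.univ : Finset F)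
    (fun _ => (Fintype.card F : ℝ)⁻¹) f (fun _ _ => by positivity) (by simp) (fun i _ => hf i) n
  rw [Fintype.expect_eq_sum_div_card, Fintype.expect_eq_sum_div_card, div_eq_inv_mul, div_eq_inv_mul,
    Finset.mul_sum, Finset.mul_sum]
  exact h

lemma norm_ex_le (f : F → ℂ) : ‖𝔼 x, f x‖ ≤ 𝔼 x, ‖f x‖ := RCLike.norm_expect_le (K := ℂ)

lemma ex_mono {f g : F → ℝ} (h : ∀ x, f x ≤ g x) : 𝔼 x, f x ≤ 𝔼 x, g x :=
  Finset.expect_le_expect fun i _ => h i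

lemma ex_le {f : F → ℝ} {a : ℝ} (h : ∀ x, f x ≤ a) : 𝔼 x, f x ≤ a :=
  Finset.expect_le Finset.univ_nonempty fun i _ => h i

lemma ex_nonneg {f : F → ℝ} (h : ∀ x, 0 ≤ f x) : 0 ≤ 𝔼 x, f x :=
  Finset.expect_nonneg fun i _ => h i

lemma ex_shift {E : Type*} [AddCommMonoid E] [Module ℚ≥0 E] (f : F → E) (a : F) :
    𝔼 x, f (x + a) = 𝔼 x, f x :=
  Fintype.expect_equiv (Equiv.addRight a) _ _ fun _ => rfl

lemma ex_scale {E : Type*} [AddCommMonoid E] [Module ℚ≥0 E] (f : F → E) {a : F} (ha : a ≠ 0) :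
    𝔼 x, f (a * x) = 𝔼 x, f x :=
  Fintype.expect_equiv (Equiv.mulLeft₀ a ha) _ _ fun _ => rfl

lemma ex_congr {E : Type*} [AddCommMonoid E] [Module ℚ≥0 E] {f g : F → E} (h : ∀ x, f x = g x) :
    𝔼 x, f x = 𝔼 x, g x := by
  rw [funext h]

lemma ex_conj (f : F → ℂ) : conj (𝔼 x, f x) = 𝔼 x, conj (f x) := by
  rw [Fintype.expect_eq_sum_div_card, Fintype.expect_eq_sum_div_card]
  simp

lemma normsq_ex (f : F → ℂ) :
    ((‖𝔼 x, f x‖ ^ 2 : ℝ) : ℂ) = 𝔼 x, 𝔼 y, f x * conj (f y) := by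
  push_cast
  rw [← Complex.mul_conj', ex_conj, Finset.expect_mul_expect]

lemma norm_mul_le_one {a b : ℂ} (ha : ‖a‖ ≤ 1) (hb : ‖b‖ ≤ 1) : ‖a * b‖ ≤ 1 := by
  rw [norm_mul]; exact mul_le_one₀ ha (norm_nonneg _) hb

lemma norm_conj_le_one {a : ℂ} (ha : ‖a‖ ≤ 1) : ‖conj a‖ ≤ 1 := by
  rwa [RCLike.norm_conj]

/-- 1-bounded functions -/
def Bd (f : F → ℂ) : Prop := ∀ x, ‖f x‖ ≤ 1

lemma ex_norm_le_one {f : F → ℂ} (h : ∀ x, ‖f x‖ ≤ 1) : ‖𝔼 x, f x‖ ≤ 1 :=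
  (norm_ex_le f).trans (ex_le h)

def Dl (a : F) (f : F → ℂ) : F → ℂ := fun x => f (x + a) * conj (f x)

lemma Bd.Dl {f : F → ℂ} (h : Bd f) (a : F) : Bd (Dl a f) := fun x =>
  norm_mul_le_one (h _) (norm_conj_le_one (h _))

noncomputable def gowers : ℕ → (F → ℂ) → ℝ
  | 0, f => ‖𝔼 x, f x‖ ^ 2
  | r + 1, f => 𝔼 a, gowers r (Dl a f)

lemma gowers_nonneg (r : ℕ) (f : F → ℂ) : 0 ≤ gowers r f := by
  induction r generalizing f with
  | zero => simp only [gowers]; positivity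
  | succ r ih => exact ex_nonneg fun a => ih _

lemma gowers_le_one (r : ℕ) {f : F → ℂ} (hf : Bd f) : gowers r f ≤ 1 := by
  induction r generalizing f with
  | zero => exact pow_le_one₀ (norm_nonneg _) (ex_norm_le_one hf)
  | succ r ih => exact ex_le fun a => ih (hf.Dl a)

lemma gowers_sq_le (r : ℕ) (f : F → ℂ) : gowers r f ^ 2 ≤ gowers (r + 1) f := by
  induction r generalizing f with
  | zero =>
    have h1 : 𝔼 a, 𝔼 x, Dl a f x = ((‖𝔼 x, f x‖ ^ 2 : ℝ) : ℂ) := by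
      rw [normsq_ex, Finset.expect_comm, Finset.expect_comm]
      rw [Finset.expect_comm]
      rw [Finset.expect_comm Finset.univ Finset.univ (fun x y => f x * conj (f y))]
      refine ex_congr fun x => ?_
      have := ex_shift (fun a => f a * conj (f x)) x
      rw [← this]
      refine ex_congr fun a => ?_
      simp only [Dl, add_comm]
    have h2 : gowers 0 f = ‖𝔼 a, 𝔼 x, Dl a f x‖ := by
      rw [h1, Complex.norm_real, Real.norm_of_nonneg (by positivity)]; rfl
    rw [h2]
    calc _ ≤ (𝔼 a, ‖𝔼 x, Dl a f x‖) ^ 2 := by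
          gcongr; exact norm_ex_le _
      _ ≤ 𝔼 a, ‖𝔼 x, Dl a f x‖ ^ 2 := expect_pow_le' _ (fun _ => norm_nonneg _) 2
      _ = gowers 1 f := rfl
  | succ r ih =>
    calc gowers (r+1) f ^ 2 ≤ 𝔼 a, gowers r (Dl a f) ^ 2 :=
          expect_pow_le' _ (fun _ => gowers_nonneg _ _) 2
      _ ≤ gowers (r+2) f := ex_mono fun a => ih _

/-- iterated averages over lists -/
def EE {E : Type*} [AddCommMonoid E] [Module ℚ≥0 E] : ℕ → (List F → E) → E
  | 0, K => K []
  | r + 1, K => 𝔼 a : F, EE r (fun h => K (a :: h))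

lemma EE_congr {E : Type*} [AddCommMonoid E] [Module ℚ≥0 E] (r : ℕ) {K K' : List F → E}
    (h : ∀ l, l.length = r → K l = K' l) : EE r K = EE r K' := by
  induction r generalizing K K' with
  | zero => exact h [] rfl
  | succ r ih => exact ex_congr fun a => ih fun l hl => h _ (by simp [hl])

lemma EE_mono (r : ℕ) {K K' : List F → ℝ}
    (h : ∀ l, l.length = r → K l ≤ K' l) : EE r K ≤ EE r K' := by
  induction r generalizing K K' with
  | zero => exact h [] rfl
  | succ r ih => exact ex_mono fun a => ih fun l hl => h _ (by simp [hl])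

lemma EE_nonneg (r : ℕ) {K : List F → ℝ} (h : ∀ l, 0 ≤ K l) : 0 ≤ EE r K := by
  induction r generalizing K with
  | zero => exact h []
  | succ r ih => exact ex_nonneg fun a => ih fun l => h _

lemma EE_pow_le (r : ℕ) {K : List F → ℝ} (h : ∀ l, 0 ≤ K l) (n : ℕ) :
    EE r K ^ n ≤ EE r (fun l => K l ^ n) := by
  induction r generalizing K with
  | zero => exact le_rfl
  | succ r ih =>
    exact (expect_pow_le' _ (fun a => EE_nonneg r fun l => h _) n).trans
      (ex_mono fun a => ih fun l => h _)

lemma EE_comm {E : Type*} [AddCommMonoid E] [Module ℚ≥0 E] (r : ℕ) (K : List F → F → E) :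
    EE r (fun h => 𝔼 x, K h x) = 𝔼 x, EE r (fun h => K h x) := by
  induction r generalizing K with
  | zero => rfl
  | succ r ih =>
    simp only [EE]
    rw [Finset.expect_comm]
    exact ex_congr fun a => ih _

lemma EE_ofReal (r : ℕ) (K : List F → ℝ) : ((EE r K : ℝ) : ℂ) = EE r (fun h => (K h : ℂ)) := by
  induction r generalizing K with
  | zero => rfl
  | succ r ih =>
    simp only [EE]
    rw [Complex.ofReal_expect]
    exact ex_congr fun a => ih _

noncomputable def box : ℕ → (List F → ℂ) → ℝ
  | 0, K => ‖𝔼 a, K [a]‖ ^ 2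
  | r + 1, K => 𝔼 a, 𝔼 b, box r (fun h => K (a :: h) * conj (K (b :: h)))

lemma box_congr (r : ℕ) {K K' : List F → ℂ} (h : ∀ l, K l = K' l) : box r K = box r K' := by
  rw [funext h]

def Low : ℕ → (List F → ℂ) → Prop
  | 0, B => ∃ c : ℂ, ‖c‖ ≤ 1 ∧ ∀ a, B [a] = c
  | r + 1, B => ∃ (b : List F → ℂ) (B' : F → List F → ℂ), (∀ h, ‖b h‖ ≤ 1) ∧
      (∀ a, Low r (B' a)) ∧ ∀ a h, B (a :: h) = b h * B' a h

lemma Low.mul {r : ℕ} {B C : List F → ℂ} (hB : Low r B) (hC : Low r C) :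
    Low r (fun h => B h * C h) := by
  induction r generalizing B C with
  | zero =>
    obtain ⟨c, hc, h⟩ := hB
    obtain ⟨c', hc', h'⟩ := hC
    exact ⟨c * c', norm_mul_le_one hc hc', fun a => by simp only [h, h']⟩
  | succ r ih =>
    obtain ⟨b, B', hb, hB', h⟩ := hB
    obtain ⟨c, C', hc, hC', h'⟩ := hC
    exact ⟨fun h => b h * c h, fun a h => B' a h * C' a h, fun h => norm_mul_le_one (hb h) (hc h),
      fun a => ih (hB' a) (hC' a), fun a l => by simp only [h, h']; ring⟩

lemma Low.conj {r : ℕ} {B : List F → ℂ} (hB : Low r B) :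
    Low r (fun h => conj (B h)) := by
  induction r generalizing B with
  | zero =>
    obtain ⟨c, hc, h⟩ := hB
    exact ⟨_, norm_conj_le_one hc, fun a => by simp only [h]⟩
  | succ r ih =>
    obtain ⟨b, B', hb, hB', h⟩ := hB
    exact ⟨_, _, fun h => norm_conj_le_one (hb h),
      fun a => ih (hB' a), fun a l => by simp only [h, map_mul]⟩

lemma box_nonneg (r : ℕ) (K : List F → ℂ) : 0 ≤ box r K := by
  induction r generalizing K with
  | zero => simp only [box]; positivity
  | succ r ih => exact ex_nonneg fun a => ex_nonneg fun b => ih _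

lemma EE_mul_left (r : ℕ) (c : ℂ) (K : List F → ℂ) : c * EE r K = EE r (fun h => c * K h) := by
  induction r generalizing K with
  | zero => rfl
  | succ r ih =>
    simp only [EE]
    rw [Finset.mul_expect]
    exact ex_congr fun a => ih _

lemma EE_norm_le (r : ℕ) (K : List F → ℂ) : ‖EE r K‖ ≤ EE r (fun h => ‖K h‖) := by
  induction r generalizing K with
  | zero => exact le_rfl
  | succ r ih => exact (norm_ex_le _).trans (ex_mono fun a => ih _)

lemma box_lemma (r : ℕ) (K B : List F → ℂ) (hB : Low r B) :
    ‖EE (r + 1) (fun h => K h * B h)‖ ^ (2 ^ (r + 1)) ≤ box r K := by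
  induction r generalizing K B with
  | zero =>
    obtain ⟨c, hc, h⟩ := hB
    have : EE 1 (fun h => K h * B h) = (𝔼 a, K [a]) * c := by
      simp only [EE, h]
      rw [Finset.expect_mul]
    rw [zero_add, this]
    simp only [box, pow_one]
    gcongr
    rw [norm_mul]
    exact mul_le_of_le_one_right (norm_nonneg _) hc
  | succ r ih =>
    obtain ⟨b, B', hb, hB', h⟩ := hB
    have e1 : EE (r + 2) (fun h => K h * B h)
        = EE (r+1) (fun h => b h * 𝔼 a, K (a :: h) * B' a h) := by
      have : ∀ l, b l * 𝔼 a, K (a :: l) * B' a l = 𝔼 a, K (a :: l) * B (a :: l) := by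
        intro l
        rw [Finset.mul_expect]
        refine ex_congr fun a => ?_
        rw [h]; ring
      simp only [this]
      rw [EE_comm]
      rfl
    have e2 : ‖EE (r + 2) (fun h => K h * B h)‖ ^ 2 ≤
        EE (r+1) (fun h => ‖𝔼 a, K (a :: h) * B' a h‖ ^ 2) := by
      rw [e1]
      calc _ ≤ (EE (r+1) (fun h => ‖𝔼 a, K (a :: h) * B' a h‖)) ^ 2 := by
            gcongr
            refine (EE_norm_le _ _).trans (EE_mono _ fun l _ => ?_)
            rw [norm_mul]
            exact mul_le_of_le_one_left (norm_nonneg _) (hb l)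
        _ ≤ _ := EE_pow_le _ (fun _ => norm_nonneg _) 2
    have e3 : ((EE (r+1) (fun h => ‖𝔼 a, K (a :: h) * B' a h‖ ^ 2) : ℝ) : ℂ) =
        𝔼 a, 𝔼 c, EE (r+1) (fun h => (K (a :: h) * conj (K (c :: h))) *
          (B' a h * conj (B' c h))) := by
      rw [EE_ofReal]
      have : ∀ l, ((‖𝔼 a, K (a :: l) * B' a l‖ ^ 2 : ℝ) : ℂ) = 𝔼 a, 𝔼 c,
          (K (a :: l) * conj (K (c :: l))) * (B' a l * conj (B' c l)) := by
        intro l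
        rw [normsq_ex]
        refine ex_congr fun a => ex_congr fun c => ?_
        rw [map_mul]; ring
      simp only [this]
      rw [EE_comm]
      refine ex_congr fun a => ?_
      rw [EE_comm]
    have e4 : EE (r+1) (fun h => ‖𝔼 a, K (a :: h) * B' a h‖ ^ 2) ≤
        𝔼 a, 𝔼 c, ‖EE (r+1) (fun h => (K (a :: h) * conj (K (c :: h))) *
          (B' a h * conj (B' c h)))‖ := by
      rw [← Real.norm_of_nonneg (EE_nonneg (r+1)
        (K := fun h => ‖𝔼 a, K (a :: h) * B' a h‖ ^ 2) (fun l => by positivity)),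
        ← Complex.norm_real, e3]
      exact (norm_ex_le _).trans (ex_mono fun a => norm_ex_le _)
    calc _ = (‖EE (r + 2) (fun h => K h * B h)‖ ^ 2) ^ (2 ^ (r+1)) := by
            rw [← pow_mul, ← pow_succ']
      _ ≤ (𝔼 a, 𝔼 c, ‖EE (r+1) (fun h => (K (a :: h) * conj (K (c :: h))) *
          (B' a h * conj (B' c h)))‖) ^ (2 ^ (r+1)) := by
            gcongr; exact e2.trans e4
      _ ≤ 𝔼 a, (𝔼 c, ‖EE (r+1) (fun h => (K (a :: h) * conj (K (c :: h))) *
          (B' a h * conj (B' c h)))‖) ^ (2 ^ (r+1)) :=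
            expect_pow_le' _ (fun a => ex_nonneg fun _ => norm_nonneg _) _
      _ ≤ 𝔼 a, 𝔼 c, ‖EE (r+1) (fun h => (K (a :: h) * conj (K (c :: h))) *
          (B' a h * conj (B' c h)))‖ ^ (2 ^ (r+1)) :=
            ex_mono fun a => expect_pow_le' _ (fun _ => norm_nonneg _) _
      _ ≤ _ := ex_mono fun a => ex_mono fun c => ih _ _ ((hB' a).mul (hB' c).conj)

def dd : List F → (F → ℂ) → F → ℂ
  | [], g => g
  | a :: h, g => dd h (Dl a g)

lemma Bd.dd {g : F → ℂ} (hg : Bd g) (l : List F) : Bd (dd l g) := by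
  induction l generalizing g with
  | nil => exact hg
  | cons a l ih => exact ih (hg.Dl a)

lemma dd_mul (l : List F) (f g : F → ℂ) (x : F) :
    dd l (fun x => f x * g x) x = dd l f x * dd l g x := by
  induction l generalizing f g with
  | nil => rfl
  | cons a l ih =>
    simp only [dd]
    rw [← ih]
    congr 1
    funext y
    simp only [Dl, map_mul]; ring

lemma dd_conj (l : List F) (f : F → ℂ) (x : F) :
    dd l (fun x => conj (f x)) x = conj (dd l f x) := by
  induction l generalizing f with
  | nil => rfl
  | cons a l ih =>
    simp only [dd]
    rw [← ih]
    congr 1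
    funext y
    simp only [Dl, map_mul]

lemma dd_shift (l : List F) (f : F → ℂ) (a x : F) :
    dd l (fun x => f (x + a)) x = dd l f (x + a) := by
  induction l generalizing f with
  | nil => rfl
  | cons b l ih =>
    simp only [dd]
    rw [← ih]
    congr 1
    funext y
    simp only [Dl]
    rw [add_right_comm]

lemma dd_cons (a : F) (l : List F) (g : F → ℂ) (x : F) :
    dd (a :: l) g x = dd l g (x + a) * conj (dd l g x) := by
  simp only [dd]
  rw [← dd_conj, ← dd_shift, ← dd_mul]
  rfl

lemma dd_decomp (r : ℕ) (g : F → ℂ) (hg : Bd g) (x : F) :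
    ∃ B, Low r B ∧ ∀ h, h.length = r + 1 → dd h g x = g (x + h.sum) * B h := by
  induction r generalizing x with
  | zero =>
    refine ⟨fun _ => conj (g x), ⟨_, norm_conj_le_one (hg x), fun _ => rfl⟩, ?_⟩
    intro h hh
    obtain ⟨a, rfl⟩ := List.length_eq_one_iff.1 hh
    simp [dd, Dl]
  | succ r ih =>
    choose B hB hB' using ih
    refine ⟨fun | [] => 0 | a :: h => conj (dd h g x) * B (x + a) h,
      ⟨fun h => conj (dd h g x), fun a => B (x + a), fun h => norm_conj_le_one (hg.dd h x),
        fun a => hB _, fun a h => rfl⟩, ?_⟩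
    intro h hh
    cases h with
    | nil => simp at hh
    | cons a h =>
      simp only
      rw [dd_cons, hB' (x + a) h (by simpa using hh), List.sum_cons, ← add_assoc]
      ring

lemma box_gowers (r : ℕ) (g : F → ℂ) :
    𝔼 x, box r (fun h => g (x + h.sum)) = gowers r g := by
  induction r generalizing g with
  | zero =>
    simp only [box, gowers, List.sum_cons, List.sum_nil, add_zero]
    have : ∀ x : F, 𝔼 a, g (x + a) = 𝔼 a, g a := fun x => by
      rw [← ex_shift g x]; exact ex_congr fun a => by rw [add_comm]
    simp only [this]
    exact Fintype.expect_const _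
  | succ r ih =>
    simp only [box, gowers]
    have h1 : ∀ v, gowers r (Dl v g) = 𝔼 x, box r (fun h => Dl v g (x + h.sum)) := fun v =>
      (ih _).symm
    simp only [h1]
    have h2 : ∀ x b v : F, box r (fun h => g (x + ((v + b) :: h).sum) * conj (g (x + (b :: h).sum)))
        = box r (fun h => Dl v g (x + b + h.sum)) := by
      intro x b v
      refine box_congr r fun h => ?_
      simp only [Dl, List.sum_cons]
      congr 2
      · ring
      · ring_nf
    calc _ = 𝔼 x : F, 𝔼 b : F, 𝔼 v : F, box r (fun h => Dl v g (x + b + h.sum)) := by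
          refine ex_congr fun x => ?_
          rw [Finset.expect_comm]
          refine ex_congr fun b => ?_
          rw [← ex_shift _ b]
          exact ex_congr fun v => h2 x b v
      _ = 𝔼 b : F, 𝔼 v : F, 𝔼 x : F, box r (fun h => Dl v g (x + b + h.sum)) := by
          rw [Finset.expect_comm]
          refine ex_congr fun b => ?_
          rw [Finset.expect_comm]
      _ = 𝔼 b : F, 𝔼 v : F, 𝔼 x : F, box r (fun h => Dl v g (x + h.sum)) := by
          refine ex_congr fun b => ex_congr fun v => ?_
          exact ex_shift (fun x => box r (fun h => Dl v g (x + h.sum))) b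
      _ = _ := Fintype.expect_const _

lemma gowers_eq_EE (r s : ℕ) (g : F → ℂ) :
    gowers (s + r) g = EE r (fun h => gowers s (dd h g)) := by
  induction r generalizing g with
  | zero => rfl
  | succ r ih =>
    simp only [EE, dd]
    exact ex_congr fun a => ih _

end basics
end Pel


namespace Pel
section dl
variable {F : Type} [Field F] [Fintype F]

lemma orth (e : AddChar F ℂ) (he : e.IsPrimitive) (f : F → ℂ) (v : F) :
    ∑ φ : F, 𝔼 u, f u * e (φ * (u - v)) = f v := by
  classical
  have h1 : ∀ φ : F, 𝔼 u, f u * e (φ * (u - v)) =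
      (Fintype.card F : ℂ)⁻¹ * ∑ u, f u * e (φ * (u - v)) := fun φ => by
    rw [Fintype.expect_eq_sum_div_card, div_eq_inv_mul]
  simp only [h1]
  rw [← Finset.mul_sum, Finset.sum_comm]
  have h2 : ∀ u, ∑ φ : F, f u * e (φ * (u - v)) = if u = v then f u * Fintype.card F else 0 := by
    intro u
    rw [← Finset.mul_sum, AddChar.sum_mulShift _ he]
    simp only [sub_eq_zero]
    split_ifs <;> simp
  simp only [h2]
  simp only [Finset.sum_ite_eq', Finset.mem_univ, if_true]
  have : (Fintype.card F : ℂ) ≠ 0 := by simp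
  field_simp

lemma e_conj (e : AddChar F ℂ) (x : F) : conj (e x) = e (-x) := (AddChar.map_neg_eq_conj e x).symm

lemma e_norm (e : AddChar F ℂ) (x : F) : ‖e x‖ = 1 := AddChar.norm_apply e x

lemma U2_inverse (e : AddChar F ℂ) (he : e.IsPrimitive) (g : F → ℂ) (hg : Bd g) :
    ∃ φ : F, gowers 1 g ≤ ‖𝔼 x, g x * e (φ * x)‖ ^ 2 := by
  set a : F → ℝ := fun φ => ‖𝔼 x, g x * e (φ * x)‖ ^ 2 with ha
  set c : F → ℂ := fun v => 𝔼 x, Dl v g x with hc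
  have h2 : ∀ φ, 𝔼 v, c v * e (φ * v) = (a φ : ℂ) := by
    intro φ
    rw [ha]
    simp only
    rw [normsq_ex, Finset.expect_comm]
    have : ∀ v, c v * e (φ * v) = 𝔼 x, (g (v + x) * e (φ * (v + x))) * conj (g x * e (φ * x)) := by
      intro v
      rw [hc]
      simp only
      rw [Finset.expect_mul]
      refine ex_congr fun x => ?_
      simp only [Dl, map_mul, e_conj, mul_add, AddChar.map_add_eq_mul]
      have : e (φ * x) * e (-(φ * x)) = 1 := by
        rw [← AddChar.map_add_eq_mul]; simp
      rw [add_comm x v]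
      linear_combination (-(g (v+x) * conj (g x) * e (φ * v))) * this
    simp only [this]
    rw [Finset.expect_comm]
    refine ex_congr fun x => ?_
    exact ex_shift (fun v => g v * e (φ * v) * conj (g x * e (φ * x))) x
  have h1 : ∀ v, ∑ φ, (a φ : ℂ) * e (-(φ * v)) = c v := by
    intro v
    rw [← orth e he c v]
    refine Finset.sum_congr rfl fun φ _ => ?_
    rw [← h2, Finset.expect_mul]
    refine ex_congr fun u => ?_
    rw [mul_assoc, ← AddChar.map_add_eq_mul]
    congr 2
    ring
  have h0 : ∑ φ, a φ ≤ 1 := by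
    have : ((∑ φ, a φ : ℝ) : ℂ) = c 0 := by
      rw [← h1]; simp
    have h3 : ‖c 0‖ ≤ 1 := ex_norm_le_one (hg.Dl 0)
    rw [← this, Complex.norm_real, Real.norm_eq_abs] at h3
    exact (le_abs_self _).trans h3
  have h4 : gowers 1 g = ∑ φ, a φ * a φ := by
    have : ((gowers 1 g : ℝ) : ℂ) = ((∑ φ, a φ * a φ : ℝ) : ℂ) := by
      have e1 : gowers 1 g = 𝔼 v, ‖c v‖ ^ 2 := rfl
      rw [e1, Complex.ofReal_expect]
      have e2 : ∀ v, ((‖c v‖ ^ 2 : ℝ) : ℂ) = ∑ φ, (a φ : ℂ) * (c v * e (φ * v)) := by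
        intro v
        push_cast
        rw [← Complex.mul_conj']
        nth_rewrite 2 [← h1 v]
        rw [map_sum, Finset.mul_sum]
        refine Finset.sum_congr rfl fun φ _ => ?_
        rw [map_mul, e_conj, neg_neg, Complex.conj_ofReal]
        ring
      simp only [e2]
      rw [Finset.expect_sum_comm]
      push_cast
      refine Finset.sum_congr rfl fun φ _ => ?_
      rw [← Finset.mul_expect, h2]
    exact_mod_cast this
  obtain ⟨φ, hφ⟩ := Finite.exists_max a
  refine ⟨φ, ?_⟩
  rw [h4]
  calc ∑ ψ, a ψ * a ψ ≤ ∑ ψ, a φ * a ψ := by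
        refine Finset.sum_le_sum fun ψ _ => ?_
        exact mul_le_mul_of_nonneg_right (hφ ψ) (by positivity)
    _ = a φ * ∑ ψ, a ψ := by rw [Finset.mul_sum]
    _ ≤ a φ := mul_le_of_le_one_right (by positivity) h0

open Classical in
noncomputable def ZZ : ℕ → (List F → ℝ) → (List F → F) → ℝ
  | 0, θ, φ => 𝔼 a, 𝔼 b, θ [a] * θ [b] * (if φ [a] = φ [b] then 1 else 0)
  | r + 1, θ, φ => 𝔼 a, 𝔼 b, ZZ r (fun h => θ (a :: h) * θ (b :: h))
      (fun h => φ (a :: h) - φ (b :: h))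

def LS : ℕ → (List F → F) → Prop
  | 0, φ => ∃ c, ∀ a, φ [a] = c
  | r + 1, φ => ∃ (ψ : List F → F) (φ' : F → List F → F), (∀ a, LS r (φ' a)) ∧
      ∀ a h, φ (a :: h) = ψ h + φ' a h

lemma LS.low (e : AddChar F ℂ) {r : ℕ} {φ : List F → F} (h : LS r φ) (u : F) :
    Low r (fun l => e (φ l * u)) := by
  induction r generalizing φ with
  | zero =>
    obtain ⟨c, hc⟩ := h
    exact ⟨e (c * u), (e_norm _ _).le, fun a => by simp only [hc]⟩
  | succ r ih =>
    obtain ⟨ψ, φ', h1, h2⟩ := h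
    refine ⟨fun l => e (ψ l * u), fun a l => e (φ' a l * u), fun l => (e_norm _ _).le,
      fun a => ih (h1 a), fun a l => ?_⟩
    simp only [h2, add_mul, AddChar.map_add_eq_mul]

open Classical in
lemma ZZ_le (r : ℕ) (θ : List F → ℝ) (hθ : ∀ l, 0 ≤ θ l ∧ θ l ≤ 1) (φ : List F → F) :
    ∃ ψ, LS r ψ ∧ ZZ r θ φ ≤ EE (r + 1) (fun h => θ h * (if φ h = ψ h then 1 else 0)) := by
  induction r generalizing θ φ with
  | zero =>
    simp only [ZZ]
    rw [Finset.expect_comm]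
    obtain ⟨b, -, hb⟩ := Finset.exists_le_of_le_expect Finset.univ_nonempty
      (le_refl (𝔼 b : F, 𝔼 a : F, θ [a] * θ [b] * (if φ [a] = φ [b] then (1:ℝ) else 0)))
    refine ⟨fun _ => φ [b], ⟨_, fun _ => rfl⟩, hb.trans ?_⟩
    refine ex_mono fun a => ?_
    simp only [EE]
    refine mul_le_mul_of_nonneg_right ?_ (by split_ifs <;> norm_num)
    exact mul_le_of_le_one_right (hθ _).1 (hθ _).2
  | succ r ih =>
    simp only [ZZ]
    rw [Finset.expect_comm]
    obtain ⟨b, -, hb⟩ := Finset.exists_le_of_le_expect Finset.univ_nonempty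
      (le_refl (𝔼 b : F, 𝔼 a : F, ZZ r (fun h => θ (a :: h) * θ (b :: h))
      (fun h => φ (a :: h) - φ (b :: h))))
    have := fun a => ih (fun h => θ (a :: h) * θ (b :: h))
      (fun l => ⟨mul_nonneg (hθ _).1 (hθ _).1, mul_le_one₀ (hθ _).2 (hθ _).1 (hθ _).2⟩)
      (fun h => φ (a :: h) - φ (b :: h))
    choose ψ h1 h2 using this
    refine ⟨fun | [] => 0 | a :: h => φ (b :: h) + ψ a h, ⟨fun h => φ (b :: h), ψ, h1, fun _ _ => rfl⟩,
      hb.trans ?_⟩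
    refine ex_mono fun a => (h2 a).trans ?_
    refine EE_mono _ fun l _ => ?_
    simp only [sub_eq_iff_eq_add']
    refine mul_le_mul_of_nonneg_right ?_ (by split_ifs <;> norm_num)
    exact mul_le_of_le_one_right (hθ _).1 (hθ _).2

variable {ι : Type} [Fintype ι]

lemma prod_bd {f : ι → ℂ} (h : ∀ i, ‖f i‖ ≤ 1) : ‖∏ i, f i‖ ≤ 1 := by
  rw [norm_prod]
  exact Finset.prod_le_one (fun _ _ => norm_nonneg _) fun i _ => h i

/-- the key function -/
noncomputable def KK (e : AddChar F ℂ) (p : ι → F → F) (θ : List F → ℝ) (w : F → ℂ)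
    (f : ι → List F → F → ℂ) (φ : List F → F) (x x' y y' : F) (h : List F) : ℂ :=
  (θ h : ℂ) * (w y * ∏ i, f i h (x + p i y)) * conj (w y' * ∏ i, f i h (x' + p i y'))
    * e (φ h * (x - x'))

lemma KK_diff (e : AddChar F ℂ) (p : ι → F → F) (θ : List F → ℝ) (w : F → ℂ)
    (hw : ∀ y, ‖w y‖ = 1)
    (f : ι → List F → F → ℂ) (φ : List F → F) (x x' y y' : F) (l l' : List F) :
    KK e p θ w f φ x x' y y' l * conj (KK e p θ w f φ x x' y y' l') =
    ((θ l * θ l' : ℝ) : ℂ) * (∏ i, f i l (x + p i y) * conj (f i l' (x + p i y))) *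
      conj (∏ i, f i l (x' + p i y') * conj (f i l' (x' + p i y')))
     * e ((φ l - φ l') * (x - x')) := by
  have hw' : ∀ y, w y * conj (w y) = 1 := fun y => by
    rw [Complex.mul_conj', hw]; norm_num
  simp only [KK, map_mul, Finset.prod_mul_distrib, map_prod, Complex.conj_conj, Complex.conj_ofReal,
    Complex.ofReal_mul, e_conj, sub_mul, sub_eq_add_neg (φ l * _), AddChar.map_add_eq_mul]
  linear_combination ((θ l : ℂ) * θ l' * (∏ i, f i l (x + p i y)) * (∏ i, conj (f i l' (x + p i y)))
    * (∏ i, conj (f i l (x' + p i y'))) * (∏ i, f i l' (x' + p i y')) * e (φ l * (x - x'))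
    * e (-(φ l' * (x - x')))) * (hw' y + w y * conj (w y) * hw' y' - 0)

lemma move1 {E : Type*} [AddCommMonoid E] [Module ℚ≥0 E] (S : F → F → F → E) :
    𝔼 y, 𝔼 a, 𝔼 b, S y a b = 𝔼 a, 𝔼 b, 𝔼 y, S y a b := by
  rw [Finset.expect_comm]
  refine ex_congr fun a => ?_
  rw [Finset.expect_comm]

lemma move2 {E : Type*} [AddCommMonoid E] [Module ℚ≥0 E] (S : F → F → F → F → F → F → E) :
    𝔼 x, 𝔼 x', 𝔼 y, 𝔼 y', 𝔼 a, 𝔼 b, S x x' y y' a b =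
    𝔼 a, 𝔼 b, 𝔼 x, 𝔼 x', 𝔼 y, 𝔼 y', S x x' y y' a b := by
  refine Eq.trans ?_ (move1 _)
  refine ex_congr fun x => Eq.trans ?_ (move1 _)
  refine ex_congr fun x' => Eq.trans ?_ (move1 _)
  exact ex_congr fun y => move1 _

lemma KK_box (e : AddChar F ℂ) (p : ι → F → F) (ε : ℝ) (hε : 0 ≤ ε)
    (H : ∀ g : ι → F → ℂ, (∀ i, Bd (g i)) → ∀ φ : F, φ ≠ 0 →
      ‖𝔼 x, 𝔼 y, (∏ i, g i (x + p i y)) * e (φ * x)‖ ≤ ε)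
    (r : ℕ) (θ : List F → ℝ) (hθ : ∀ l, 0 ≤ θ l ∧ θ l ≤ 1) (w : F → ℂ) (hw : ∀ y, ‖w y‖ = 1)
    (f : ι → List F → F → ℂ) (hf : ∀ i l, Bd (f i l)) (φ : List F → F) :
    𝔼 x, 𝔼 x', 𝔼 y, 𝔼 y', box r (KK e p θ w f φ x x' y y') ≤ ZZ r θ φ + ε ^ 2 := by
  classical
  induction r generalizing θ w f φ with
  | zero =>
    set R : F → F → ℝ := fun a b => θ [a] * θ [b] *
      ‖𝔼 x, 𝔼 y, (∏ i, f i [a] (x + p i y) * conj (f i [b] (x + p i y))) *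
        e ((φ [a] - φ [b]) * x)‖ ^ 2 with hR
    have h1 : ((𝔼 x, 𝔼 x', 𝔼 y, 𝔼 y', box 0 (KK e p θ w f φ x x' y y') : ℝ) : ℂ) =
        ((𝔼 a, 𝔼 b, R a b : ℝ) : ℂ) := by
      simp only [Complex.ofReal_expect, box, normsq_ex, KK_diff e p θ w hw]
      have e1 : ∀ a b, ((R a b : ℝ) : ℂ) = 𝔼 x, 𝔼 x', 𝔼 y, 𝔼 y',
        (((θ [a] * θ [b] : ℝ) : ℂ) * (∏ i, f i [a] (x + p i y) * conj (f i [b] (x + p i y))) *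
      conj (∏ i, f i [a] (x' + p i y') * conj (f i [b] (x' + p i y')))
     * e ((φ [a] - φ [b]) * (x - x'))) := by
        intro a b
        rw [hR]
        simp only
        rw [Complex.ofReal_mul, normsq_ex, Finset.mul_expect]
        refine ex_congr fun x => ?_
        rw [Finset.mul_expect]
        refine ex_congr fun x' => ?_
        rw [ex_conj, Finset.expect_mul_expect, Finset.mul_expect]
        refine ex_congr fun y => ?_
        rw [Finset.mul_expect]
        refine ex_congr fun y' => ?_
        rw [map_mul (starRingEnd ℂ), e_conj, mul_sub, sub_eq_add_neg ((φ [a] - φ [b]) * x), AddChar.map_add_eq_mul]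
        ring
      simp only [e1]
      exact move2 _
    have h2 : (𝔼 x, 𝔼 x', 𝔼 y, 𝔼 y', box 0 (KK e p θ w f φ x x' y y')) = 𝔼 a, 𝔼 b, R a b := by
      exact_mod_cast h1
    rw [h2]
    have h3 : ∀ a b, R a b ≤ θ [a] * θ [b] * (if φ [a] = φ [b] then 1 else 0) + ε ^ 2 := by
      intro a b
      have t0 : 0 ≤ θ [a] * θ [b] := mul_nonneg (hθ _).1 (hθ _).1
      have t1 : θ [a] * θ [b] ≤ 1 := mul_le_one₀ (hθ _).2 (hθ _).1 (hθ _).2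
      have hb : ∀ i, Bd (fun z => f i [a] z * conj (f i [b] z)) := fun i z =>
        norm_mul_le_one (hf _ _ _) (norm_conj_le_one (hf _ _ _))
      split_ifs with hc
      · have : ‖𝔼 x, 𝔼 y, (∏ i, f i [a] (x + p i y) * conj (f i [b] (x + p i y))) *
          e ((φ [a] - φ [b]) * x)‖ ≤ 1 := by
          refine ex_norm_le_one fun x => ex_norm_le_one fun y => ?_
          exact norm_mul_le_one (prod_bd fun i => hb i _) (e_norm _ _).le
        have := pow_le_one₀ (n := 2) (norm_nonneg _) this
        have := mul_le_mul_of_nonneg_left this t0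
        simp only [hR]
        nlinarith [sq_nonneg ε]
      · have := H (fun i z => f i [a] z * conj (f i [b] z)) hb (φ [a] - φ [b]) (sub_ne_zero.2 hc)
        have := pow_le_pow_left₀ (norm_nonneg _) this 2
        simp only [hR]
        rw [mul_zero, zero_add]
        refine le_trans ?_ this
        exact mul_le_of_le_one_left (by positivity) t1
    calc _ ≤ 𝔼 a, 𝔼 b, (θ [a] * θ [b] * (if φ [a] = φ [b] then 1 else 0) + ε ^ 2) :=
          ex_mono fun a => ex_mono fun b => h3 a b
      _ = _ := by
          simp only [Finset.expect_add_distrib, ZZ]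
          rw [Fintype.expect_const, Fintype.expect_const]
  | succ r ih =>
    simp only [box, ZZ]
    rw [move2]
    calc _ ≤ 𝔼 a, 𝔼 b, (ZZ r (fun h => θ (a :: h) * θ (b :: h))
            (fun h => φ (a :: h) - φ (b :: h)) + ε ^ 2) := by
          refine ex_mono fun a => ex_mono fun b => ?_
          have := ih (fun h => θ (a :: h) * θ (b :: h))
            (fun l => ⟨mul_nonneg (hθ _).1 (hθ _).1, mul_le_one₀ (hθ _).2 (hθ _).1 (hθ _).2⟩)
            (fun _ => 1) (fun _ => by simp)
            (fun i h z => f i (a :: h) z * conj (f i (b :: h) z))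
            (fun i l z => norm_mul_le_one (hf _ _ _) (norm_conj_le_one (hf _ _ _)))
            (fun h => φ (a :: h) - φ (b :: h))
          refine le_trans (le_of_eq ?_) this
          refine ex_congr fun x => ex_congr fun x' => ex_congr fun y => ex_congr fun y' => ?_
          refine box_congr r fun h => ?_
          rw [KK_diff e p θ w hw]
          simp only [KK, one_mul]
      _ = _ := by
          simp only [Finset.expect_add_distrib]
          rw [Fintype.expect_const, Fintype.expect_const]

theorem degree_lower (e : AddChar F ℂ) (he : e.IsPrimitive) (p : ι → F → F) (ε : ℝ) (hε : 0 ≤ ε)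
    (H : ∀ g : ι → F → ℂ, (∀ i, Bd (g i)) → ∀ φ : F, φ ≠ 0 →
      ‖𝔼 x, 𝔼 y, (∏ i, g i (x + p i y)) * e (φ * x)‖ ≤ ε)
    (r : ℕ) (w : F → ℂ) (hw : ∀ y, ‖w y‖ = 1)
    (f : ι → F → ℂ) (hf : ∀ i, Bd (f i)) (G : F → ℂ)
    (hG : ∀ x, G x = 𝔼 y, w y * ∏ i, f i (x + p i y)) :
    ∃ τ : ℝ, 0 ≤ τ ∧ gowers (r + 2) G ^ (2 * 2 ^ (r + 1)) ≤ τ + ε ^ 2 ∧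
      τ ^ (2 ^ (r + 1)) ≤ gowers (r + 1) G := by
  classical
  have hGb : Bd G := fun x => by
    rw [hG]
    exact ex_norm_le_one fun y => norm_mul_le_one (hw y).le (prod_bd fun i => hf i _)
  have := fun h : List F => U2_inverse e he (dd h G) (hGb.dd h)
  choose φ hφ using this
  set Th : (List F → F) → List F → ℝ := fun ψ h => ‖𝔼 x, dd h G x * e (ψ h * x)‖ ^ 2 with hTh
  have hTh01 : ∀ ψ l, 0 ≤ Th ψ l ∧ Th ψ l ≤ 1 := fun ψ l => ⟨by positivity, by
    refine pow_le_one₀ (norm_nonneg _) (ex_norm_le_one fun x => ?_)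
    exact norm_mul_le_one (hGb.dd l x) (e_norm _ _).le⟩
  choose B hB hB' using fun x => dd_decomp r G hGb x
  have e1 : gowers (r + 2) G ≤ EE (r + 1) (Th φ) := by
    rw [show r + 2 = 1 + (r + 1) by ring, gowers_eq_EE]
    exact EE_mono _ fun l _ => hφ l
  have e2 : gowers (r + 2) G ^ 2 ≤ EE (r + 1) (fun l => Th φ l ^ 2) :=
    (pow_le_pow_left₀ (gowers_nonneg _ _) e1 2).trans (EE_pow_le _ (fun l => (hTh01 _ l).1) 2)
  have e3 : ((EE (r + 1) (fun l => Th φ l ^ 2) : ℝ) : ℂ) =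
      𝔼 x, 𝔼 x', 𝔼 y, 𝔼 y', EE (r + 1) (fun l =>
        KK e p (Th φ) w (fun i l z => f i (z + l.sum)) φ x x' y y' l * (B x l * conj (B x' l))) := by
    rw [EE_ofReal]
    simp only [← EE_comm]
    refine EE_congr _ fun l hl => ?_
    have : ((Th φ l : ℝ) : ℂ) = 𝔼 x, 𝔼 x', (dd l G x * e (φ l * x)) *
        conj (dd l G x' * e (φ l * x')) := by
      simp only [hTh]
      rw [normsq_ex]
    rw [pow_two, Complex.ofReal_mul]
    nth_rewrite 2 [this]
    rw [Finset.mul_expect]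
    refine ex_congr fun x => ?_
    rw [Finset.mul_expect]
    refine ex_congr fun x' => ?_
    rw [hB' x l hl, hB' x' l hl, hG, hG]
    simp only [map_mul, ex_conj, e_conj]
    simp only [Finset.expect_mul, Finset.mul_expect]
    rw [Finset.expect_comm]
    refine ex_congr fun y => ?_
    refine ex_congr fun y' => ?_
    simp only [KK, map_mul, mul_sub, sub_eq_add_neg (φ l * x), AddChar.map_add_eq_mul]
    have s1 : ∀ x y : F, ∏ i, f i (x + p i y + l.sum) = ∏ i, f i (x + l.sum + p i y) := fun x y =>
      Finset.prod_congr rfl fun i _ => by rw [add_right_comm]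
    simp only [s1]
    ring
  have e4 : gowers (r + 2) G ^ (2 * 2 ^ (r + 1)) ≤ ZZ r (Th φ) φ + ε ^ 2 := by
    have t1 : EE (r + 1) (fun l => Th φ l ^ 2) ≤ 𝔼 x, 𝔼 x', 𝔼 y, 𝔼 y', ‖EE (r + 1) (fun l =>
        KK e p (Th φ) w (fun i l z => f i (z + l.sum)) φ x x' y y' l * (B x l * conj (B x' l)))‖ := by
      rw [← Real.norm_of_nonneg (EE_nonneg (r+1) (K := fun l => Th φ l ^ 2) (fun l => by positivity)),
        ← Complex.norm_real, e3]
      refine (norm_ex_le _).trans (ex_mono fun x => ?_)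
      refine (norm_ex_le _).trans (ex_mono fun x' => ?_)
      exact (norm_ex_le _).trans (ex_mono fun y => norm_ex_le _)
    have t2 : EE (r + 1) (fun l => Th φ l ^ 2) ^ (2 ^ (r + 1)) ≤
        𝔼 x, 𝔼 x', 𝔼 y, 𝔼 y', box r (KK e p (Th φ) w (fun i l z => f i (z + l.sum)) φ x x' y y') := by
      refine (pow_le_pow_left₀ (EE_nonneg _ fun l => by positivity) t1 _).trans ?_
      refine (expect_pow_le' _ (fun x => ex_nonneg fun x' => ex_nonneg fun y => ex_nonneg fun y' =>
        norm_nonneg _) _).trans (ex_mono fun x => ?_)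
      refine (expect_pow_le' _ (fun x' => ex_nonneg fun y => ex_nonneg fun y' =>
        norm_nonneg _) _).trans (ex_mono fun x' => ?_)
      refine (expect_pow_le' _ (fun y => ex_nonneg fun y' =>
        norm_nonneg _) _).trans (ex_mono fun y => ?_)
      refine (expect_pow_le' _ (fun y' => norm_nonneg _) _).trans (ex_mono fun y' => ?_)
      exact box_lemma r _ _ ((hB x).mul (hB x').conj)
    rw [pow_mul]
    refine (pow_le_pow_left₀ (by positivity) e2 _).trans (t2.trans ?_)
    exact KK_box e p ε hε H r (Th φ) (hTh01 φ) w hw _ (fun i l z => hf i _) φ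
  obtain ⟨ψ, hψ, hZ⟩ := ZZ_le r (Th φ) (hTh01 φ) φ
  refine ⟨EE (r + 1) (Th ψ), EE_nonneg _ (fun l => (hTh01 _ l).1), ?_, ?_⟩
  · refine e4.trans ?_
    have : EE (r + 1) (fun h => Th φ h * (if φ h = ψ h then 1 else 0)) ≤ EE (r + 1) (Th ψ) := by
      refine EE_mono _ fun l _ => ?_
      split_ifs with hc
      · simp only [hTh, hc, mul_one]; exact le_rfl
      · rw [mul_zero]; exact (hTh01 _ l).1
    linarith
  · have f1 : ((EE (r + 1) (Th ψ) : ℝ) : ℂ) = 𝔼 u, 𝔼 x, EE (r + 1) (fun l =>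
        dd l (Dl u G) x * e (ψ l * u)) := by
      rw [EE_ofReal]
      simp only [← EE_comm]
      refine EE_congr _ fun l hl => ?_
      simp only [hTh]
      rw [normsq_ex, Finset.expect_comm, Finset.expect_comm Finset.univ Finset.univ
        (fun u x => dd l (Dl u G) x * e (ψ l * u))]
      refine ex_congr fun x => ?_
      rw [← ex_shift (fun z => dd l G z * e (ψ l * z) * conj (dd l G x * e (ψ l * x))) x]
      refine ex_congr fun u => ?_
      have : dd l (Dl u G) x = dd l G (u + x) * conj (dd l G x) := by
        rw [add_comm u x]; exact dd_cons u l G x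
      rw [this, map_mul (starRingEnd ℂ), e_conj, mul_add, AddChar.map_add_eq_mul]
      have : e (ψ l * x) * e (-(ψ l * x)) = 1 := by
        rw [← AddChar.map_add_eq_mul]; simp
      linear_combination (dd l G (u + x) * conj (dd l G x) * e (ψ l * u)) * this
    have f2 : EE (r + 1) (Th ψ) ≤ 𝔼 u, 𝔼 x, ‖EE (r + 1) (fun l =>
        dd l (Dl u G) x * e (ψ l * u))‖ := by
      rw [← Real.norm_of_nonneg (EE_nonneg (r+1) (K := Th ψ) (fun l => (hTh01 _ l).1)),
        ← Complex.norm_real, f1]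
      exact (norm_ex_le _).trans (ex_mono fun x => norm_ex_le _)
    refine (pow_le_pow_left₀ (EE_nonneg _ (fun l => (hTh01 _ l).1)) f2 _).trans ?_
    refine (expect_pow_le' _ (fun u => ex_nonneg fun x => norm_nonneg _) _).trans
      (ex_mono fun u => ?_)
    refine (expect_pow_le' _ (fun x => norm_nonneg _) _).trans ?_
    rw [← box_gowers]
    refine ex_mono fun x => ?_
    obtain ⟨C, hC, hC'⟩ := dd_decomp r (Dl u G) (hGb.Dl u) x
    have : EE (r + 1) (fun l => dd l (Dl u G) x * e (ψ l * u)) =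
        EE (r + 1) (fun l => Dl u G (x + l.sum) * (C l * e (ψ l * u))) :=
      EE_congr _ fun l hl => by rw [hC' l hl]; ring
    rw [this]
    exact box_lemma r _ _ (hC.mul (hψ.low e u))

end dl
end Pel



namespace Pel

section pet
variable {F : Type} [Field F] [Fintype F]

/-- product of the functions of a family evaluated along the progression -/
noncomputable def prodM (M : List (F[X] × (F → ℂ))) (x y : F) : ℂ :=
  (M.map fun p => p.2 (x + p.1.eval y)).prod

noncomputable def Lam (T : F[X]) (f : F → ℂ) (M : List (F[X] × (F → ℂ))) : ℂ :=
  𝔼 x, 𝔼 y, f (x + T.eval y) * prodM M x y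

@[simp] lemma prodM_nil (x y : F) : prodM ([] : List (F[X] × (F → ℂ))) x y = 1 := rfl
@[simp] lemma prodM_cons (p : F[X] × (F → ℂ)) (M) (x y : F) :
    prodM (p :: M) x y = p.2 (x + p.1.eval y) * prodM M x y := by simp [prodM]

lemma prodM_bd (M : List (F[X] × (F → ℂ))) (hM : ∀ p ∈ M, Bd p.2) (x y : F) :
    ‖prodM M x y‖ ≤ 1 := by
  induction M with
  | nil => simp
  | cons p M ih =>
    rw [prodM_cons]
    exact norm_mul_le_one (hM p (by simp) _) (ih fun q hq => hM q (by simp [hq]))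

lemma Lam_le_one (T : F[X]) {f : F → ℂ} (hf : Bd f) (M : List (F[X] × (F → ℂ)))
    (hM : ∀ p ∈ M, Bd p.2) : ‖Lam T f M‖ ≤ 1 :=
  ex_norm_le_one fun x => ex_norm_le_one fun y =>
    norm_mul_le_one (hf _) (prodM_bd M hM x y)

noncomputable def shiftM (b : F[X]) (M : List (F[X] × (F → ℂ))) : List (F[X] × (F → ℂ)) :=
  M.map fun p => (p.1 - b, p.2)

lemma Lam_shift (b T : F[X]) (f : F → ℂ) (M : List (F[X] × (F → ℂ))) :
    Lam T f M = Lam (T - b) f (shiftM b M) := by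
  unfold Lam
  rw [Finset.expect_comm, Finset.expect_comm Finset.univ Finset.univ
    (fun x y => f (x + (T - b).eval y) * prodM (shiftM b M) x y)]
  refine ex_congr fun y => ?_
  rw [← ex_shift (fun x => f (x + (T - b).eval y) * prodM (shiftM b M) x y) (b.eval y)]
  refine ex_congr fun x => ?_
  have h : ∀ Q : F[X], x + b.eval y + (Q - b).eval y = x + Q.eval y := fun Q => by
    rw [eval_sub]; ring
  simp only [prodM, shiftM, List.map_map, Function.comp_def, h]

/-- van der Corput -/
lemma vdC (B : F → ℂ) (hB : Bd B) (A : F → F → ℂ) :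
    ‖𝔼 x, 𝔼 y, B x * A x y‖ ^ 2 ≤ 𝔼 h, ‖𝔼 x, 𝔼 y, A x (y + h) * conj (A x y)‖ := by
  have h1 : ‖𝔼 x, 𝔼 y, B x * A x y‖ ≤ 𝔼 x, ‖𝔼 y, A x y‖ := by
    refine (norm_ex_le _).trans (ex_mono fun x => ?_)
    rw [← Finset.mul_expect, norm_mul]
    exact mul_le_of_le_one_left (norm_nonneg _) (hB x)
  have h2 : ((𝔼 x, ‖𝔼 y, A x y‖ ^ 2 : ℝ) : ℂ) = 𝔼 h, 𝔼 x, 𝔼 y, A x (y + h) * conj (A x y) := by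
    rw [Complex.ofReal_expect, Finset.expect_comm]
    refine ex_congr fun x => ?_
    rw [normsq_ex, Finset.expect_comm, Finset.expect_comm Finset.univ Finset.univ
      (fun h y => A x (y + h) * conj (A x y))]
    refine ex_congr fun y => ?_
    rw [← ex_shift (fun z => A x z * conj (A x y)) y]
    exact ex_congr fun h => by rw [add_comm]
  calc _ ≤ (𝔼 x, ‖𝔼 y, A x y‖) ^ 2 := pow_le_pow_left₀ (norm_nonneg _) h1 2
    _ ≤ 𝔼 x, ‖𝔼 y, A x y‖ ^ 2 := expect_pow_le' _ (fun _ => norm_nonneg _) 2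
    _ = ‖((𝔼 x, ‖𝔼 y, A x y‖ ^ 2 : ℝ) : ℂ)‖ := by
        rw [Complex.norm_real, Real.norm_of_nonneg (ex_nonneg fun x => by positivity)]
    _ ≤ _ := by rw [h2]; exact norm_ex_le _

def cj (f : F → ℂ) : F → ℂ := fun x => conj (f x)

lemma Bd.cj {f : F → ℂ} (h : Bd f) : Bd (cj f) := fun x => norm_conj_le_one (h x)

noncomputable def stepM (T : F[X]) (f : F → ℂ) (h : F) (M : List (F[X] × (F → ℂ))) :
    List (F[X] × (F → ℂ)) :=
  (T, cj f) :: M.flatMap fun p => [(taylor h p.1, p.2), (p.1, cj p.2)]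

lemma mem_stepM {T : F[X]} {f : F → ℂ} {h : F} {M : List (F[X] × (F → ℂ))}
    {r : F[X] × (F → ℂ)} (hr : r ∈ stepM T f h M) :
    r = (T, cj f) ∨ ∃ p ∈ M, r = (taylor h p.1, p.2) ∨ r = (p.1, cj p.2) := by
  simp only [stepM, List.mem_cons, List.mem_flatMap, List.not_mem_nil, or_false] at hr
  exact hr

lemma length_stepM (T : F[X]) (f : F → ℂ) (h : F) (M : List (F[X] × (F → ℂ))) :
    (stepM T f h M).length = 2 * M.length + 1 := by
  simp only [stepM, List.length_cons]
  congr 1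
  induction M with
  | nil => rfl
  | cons p M ih => simp [List.flatMap_cons, ih]; ring

lemma prodM_stepM (T : F[X]) (f : F → ℂ) (h : F) (M : List (F[X] × (F → ℂ))) (x y : F) :
    prodM (stepM T f h M) x y =
      conj (f (x + T.eval y)) * (prodM M x (y + h) * conj (prodM M x y)) := by
  simp only [stepM, prodM_cons, cj]
  congr 1
  induction M with
  | nil => simp
  | cons p M ih =>
    simp only [List.flatMap_cons, List.cons_append, List.nil_append, prodM_cons, ih, taylor_eval,
      map_mul]
    simp only [cj]
    ring

open Classical in
noncomputable def nc (M : List (F[X] × (F → ℂ))) : List (F[X] × (F → ℂ)) :=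
  M.filter fun p => decide (p.1.natDegree ≠ 0)

lemma mem_nc {M : List (F[X] × (F → ℂ))} {p} : p ∈ nc M ↔ p ∈ M ∧ p.1.natDegree ≠ 0 := by
  simp [nc]

lemma length_nc (M : List (F[X] × (F → ℂ))) : (nc M).length ≤ M.length := List.length_filter_le _ _

lemma nc_prod (M : List (F[X] × (F → ℂ))) (hM : ∀ p ∈ M, Bd p.2) :
    ∃ B : F → ℂ, Bd B ∧ ∀ x y, prodM M x y = B x * prodM (nc M) x y := by
  classical
  induction M with
  | nil => exact ⟨fun _ => 1, fun x => by simp, fun x y => by simp [nc]⟩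
  | cons p M ih =>
    obtain ⟨B, hB, h⟩ := ih fun q hq => hM q (by simp [hq])
    by_cases hp : p.1.natDegree = 0
    · refine ⟨fun x => p.2 (x + p.1.coeff 0) * B x, fun x =>
        norm_mul_le_one (hM p (by simp) _) (hB x), fun x y => ?_⟩
      have e1 : nc (p :: M) = nc M := by simp [nc, List.filter_cons, hp]
      have e2 : p.1.eval y = p.1.coeff 0 := by
        conv_lhs => rw [eq_C_of_natDegree_eq_zero hp]
        simp
      rw [e1, prodM_cons, h, e2]; ring
    · refine ⟨B, hB, fun x y => ?_⟩
      have e1 : nc (p :: M) = p :: nc M := by simp [nc, List.filter_cons, hp]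
      rw [e1, prodM_cons, prodM_cons, h]; ring

lemma vdC_Lam (T : F[X]) (f : F → ℂ) (M : List (F[X] × (F → ℂ))) (hM : ∀ p ∈ M, Bd p.2) :
    ‖Lam T f M‖ ^ 2 ≤ 𝔼 h, ‖Lam (taylor h T) f (stepM T f h (nc M))‖ := by
  obtain ⟨B, hB, hBM⟩ := nc_prod M hM
  have h1 : Lam T f M = 𝔼 x, 𝔼 y, B x * (f (x + T.eval y) * prodM (nc M) x y) :=
    ex_congr fun x => ex_congr fun y => by rw [hBM]; ring
  rw [h1]
  refine (vdC B hB _).trans (le_of_eq ?_)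
  refine ex_congr fun h => ?_
  congr 1
  refine ex_congr fun x => ex_congr fun y => ?_
  rw [prodM_stepM, taylor_eval, map_mul]
  ring

def Ctl (s K : ℕ) (C : ℝ) (T : F[X]) (M : List (F[X] × (F → ℂ))) : Prop :=
  ∀ f : F → ℂ, Bd f → ‖Lam T f M‖ ^ K ≤ gowers s f + C / Fintype.card F

lemma Ctl.up {s K : ℕ} {C : ℝ} {T : F[X]} {M : List (F[X] × (F → ℂ))} (hC : 0 ≤ C)
    (h : Ctl s K C T M) : Ctl (s + 1) (K * 2) (2 * C + C ^ 2) T M := by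
  intro f hf
  have h1 := h f hf
  have q1 : (1 : ℝ) ≤ Fintype.card F := by exact_mod_cast Fintype.card_pos
  have h2 := gowers_sq_le s f
  have h3 := gowers_nonneg s f
  have h4 := gowers_le_one s hf
  have h5 : 0 ≤ C / Fintype.card F := by positivity
  have h6 : (C / Fintype.card F) ^ 2 ≤ C ^ 2 / Fintype.card F := by
    rw [div_pow]
    apply div_le_div_of_nonneg_left (by positivity) (by positivity)
    nlinarith
  rw [pow_mul]
  calc _ ≤ (gowers s f + C / Fintype.card F) ^ 2 := pow_le_pow_left₀ (by positivity) h1 2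
    _ = gowers s f ^ 2 + 2 * gowers s f * (C / Fintype.card F) + (C / Fintype.card F) ^ 2 := by ring
    _ ≤ gowers (s + 1) f + 2 * (C / Fintype.card F) + C ^ 2 / Fintype.card F := by
        nlinarith
    _ = _ := by ring

lemma Ctl.mono {s K K' : ℕ} {C C' : ℝ} {T : F[X]} {M : List (F[X] × (F → ℂ))}
    (hM : ∀ p ∈ M, Bd p.2) (hK : K ≤ K') (hC : C ≤ C')
    (h : Ctl s K C T M) : Ctl s K' C' T M := by
  intro f hf
  refine (pow_le_pow_of_le_one (norm_nonneg _) (Lam_le_one T hf M hM) hK).trans ((h f hf).trans ?_)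
  gcongr

def Ctl' (N : ℕ) (T : F[X]) (M : List (F[X] × (F → ℂ))) : Prop :=
  Ctl N (N * 2 ^ N) ((N + 1 : ℝ) ^ (2 ^ N)) T M

lemma Ctl'.mono {N N' : ℕ} (hN : N ≤ N') {T : F[X]} {M : List (F[X] × (F → ℂ))}
    (hM : ∀ p ∈ M, Bd p.2) (h : Ctl' N T M) : Ctl' N' T M := by
  induction N', hN using Nat.le_induction with
  | base => exact h
  | succ n hn ih =>
    have := Ctl.up (by positivity) ih
    refine Ctl.mono hM ?_ ?_ this
    · rw [pow_succ, ← mul_assoc]; gcongr; omega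
    · have h1 : ((n : ℝ) + 1) ^ (2 ^ n) + 1 ≤ ((n : ℝ) + 1 + 1) ^ (2 ^ n) := by
        have := pow_add_pow_le (x := (n:ℝ)+1) (y := 1) (n := 2 ^ n) (by positivity) (by norm_num)
          (by positivity)
        simpa using this
      push_cast
      rw [pow_succ 2 n, pow_mul]
      have h2 : (0 : ℝ) ≤ ((n : ℝ) + 1) ^ (2 ^ n) := by positivity
      nlinarith

lemma Ctl.to_Ctl' {s K N : ℕ} {C : ℝ} (hC : 0 ≤ C) {T : F[X]} {M : List (F[X] × (F → ℂ))}
    (hM : ∀ p ∈ M, Bd p.2) (h : Ctl s K C T M) (hs : s ≤ N) (hK : K ≤ N) (hCN : C ≤ N) :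
    Ctl' N T M := by
  have key : ∀ k, Ctl (s + k) (N * 2 ^ k) ((N + 1 : ℝ) ^ (2 ^ k) - 1) T M := by
    intro k
    induction k with
    | zero => exact Ctl.mono hM (by simpa using hK) (by simpa using hCN) h
    | succ k ih =>
      have h1 : (1:ℝ) ≤ (N + 1 : ℝ) ^ (2 ^ k) := one_le_pow₀ (by simp)
      have := Ctl.up (by linarith) ih
      refine Ctl.mono hM ?_ ?_ this
      · rw [pow_succ, ← mul_assoc]
      · rw [pow_succ 2 k, pow_mul]; nlinarith
  obtain ⟨k, rfl⟩ := Nat.exists_eq_add_of_le hs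
  refine Ctl.mono hM ?_ ?_ (key k)
  · gcongr; · norm_num
    omega
  · have : ((s + k : ℕ) + 1 : ℝ) ^ (2 ^ k) ≤ ((s + k : ℕ) + 1 : ℝ) ^ (2 ^ (s + k)) := by
      apply pow_le_pow_right₀
      · simp; positivity
      · gcongr; · norm_num
        omega
    linarith

/-- averaging step -/
lemma avg_step {s K : ℕ} {C : ℝ} {T : F[X]} {M : List (F[X] × (F → ℂ))}
    (hM : ∀ p ∈ M, Bd p.2) (m : ℕ) (S : Finset F) (hS : S.card ≤ m)
    (f : F → ℂ) (hf : Bd f) (hC : 0 ≤ C)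
    (h : ∀ h ∉ S, Ctl s K C (taylor h T) (stepM T f h (nc M))) :
    ‖Lam T f M‖ ^ (2 * K) ≤ gowers s f + (C + m) / Fintype.card F := by
  classical
  have hb : ∀ h, ∀ p ∈ stepM T f h (nc M), Bd p.2 := by
    intro h p hp
    rcases mem_stepM hp with rfl | ⟨q, hq, rfl | rfl⟩
    · exact hf.cj
    · exact hM q (mem_nc.1 hq).1
    · exact (hM q (mem_nc.1 hq).1).cj
  rw [pow_mul]
  calc _ ≤ (𝔼 h, ‖Lam (taylor h T) f (stepM T f h (nc M))‖) ^ K :=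
        pow_le_pow_left₀ (by positivity) (vdC_Lam T f M hM) K
    _ ≤ 𝔼 h, ‖Lam (taylor h T) f (stepM T f h (nc M))‖ ^ K :=
        expect_pow_le' _ (fun _ => norm_nonneg _) K
    _ ≤ 𝔼 z, ((gowers s f + C / Fintype.card F) + if z ∈ S then 1 else 0) := by
        refine ex_mono fun z => ?_
        split_ifs with hz
        · have h1 := pow_le_one₀ (n := K) (norm_nonneg _)
            (Lam_le_one (taylor z T) hf _ (hb z))
          have h2 := gowers_nonneg s f
          have : 0 ≤ C / Fintype.card F := by positivity
          linarith
        · rw [add_zero]; exact h z hz f hf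
    _ = gowers s f + (C + S.card) / Fintype.card F := by
        rw [Finset.expect_add_distrib, Fintype.expect_const, Fintype.expect_eq_sum_div_card]
        simp
        ring
    _ ≤ _ := by gcongr

end pet
end Pel



namespace Pel

section pet2

def Good {F : Type} [Field F] (D n : ℕ) (T : F[X]) (M : List (F[X] × (F → ℂ))) : Prop :=
  M.length ≤ n ∧ ∀ p ∈ M, Bd p.2 ∧ 1 ≤ (T - p.1).natDegree ∧ (T - p.1).natDegree ≤ D

def Claim (D : ℕ) : Prop := ∀ n : ℕ, ∃ N : ℕ, ∀ (F : Type) [Field F] [Fintype F],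
  (∀ j : ℕ, 1 ≤ j → j ≤ D → (j : F) ≠ 0) → ∀ (T : F[X]) (M : List (F[X] × (F → ℂ))),
    Good D n T M → Ctl' N T M

lemma lin_ctl {F : Type} [Field F] [Fintype F] (n : ℕ) : ∀ (T : F[X]) (M : List (F[X] × (F → ℂ))),
    M.length = n → (∀ p ∈ M, Bd p.2 ∧ (T - p.1).natDegree = 1) →
    Ctl n (2 * 2 ^ n) 0 T M := by
  induction n with
  | zero =>
    intro T M hM _ f hf
    obtain rfl := List.length_eq_zero_iff.1 hM
    have : Lam T f [] = 𝔼 x, f x := by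
      simp only [Lam, prodM_nil, mul_one]
      rw [Finset.expect_comm]
      simp only [ex_shift]
      exact Fintype.expect_const _
    rw [this]
    simp [gowers]
  | succ n ih =>
    intro T M hlen hM f hf
    obtain ⟨p, M', rfl⟩ := List.exists_cons_of_length_eq_add_one hlen
    rw [Lam_shift p.1]
    set T1 := T - p.1 with hT1
    have dT1 : T1.natDegree = 1 := (hM p (by simp)).2
    set M1 := shiftM p.1 M' with hM1
    have hM1b : ∀ q ∈ M1, Bd q.2 ∧ (T1 - q.1).natDegree = 1 := by
      intro q hq
      simp only [hM1, shiftM, List.mem_map] at hq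
      obtain ⟨r, hr, rfl⟩ := hq
      have := hM r (by simp [hr])
      refine ⟨this.1, ?_⟩
      rw [hT1]; simpa using this.2
    have hlin : ∀ Q : F[X], Q.natDegree ≤ 1 → ∀ y h : F, Q.eval (y + h) = Q.eval y + Q.coeff 1 * h := by
      intro Q hQ y h
      rw [eq_X_add_C_of_natDegree_le_one hQ]
      simp; ring
    have hM1d : ∀ q ∈ M1, q.1.natDegree ≤ 1 := by
      intro q hq
      have h1 := (hM1b q hq).2
      have : q.1 = T1 - (T1 - q.1) := by ring
      rw [this]
      exact (natDegree_sub_le _ _).trans (by rw [h1, dT1]; simp)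
    set N : F → List (F[X] × (F → ℂ)) := fun h => M1.map fun q => (q.1, Dl (q.1.coeff 1 * h) q.2)
      with hN
    have e0 : Lam T1 f (shiftM p.1 (p :: M')) =
        𝔼 x, 𝔼 y, p.2 x * (f (x + T1.eval y) * prodM M1 x y) := by
      refine ex_congr fun x => ex_congr fun y => ?_
      simp only [shiftM, List.map_cons, prodM_cons, hM1]
      simp; ring
    have hpr : ∀ (L : List (F[X] × (F → ℂ))) (hL : ∀ q ∈ L, q.1.natDegree ≤ 1) (h x y : F),
        prodM (L.map fun q => (q.1, Dl (q.1.coeff 1 * h) q.2)) x y =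
          prodM L x (y + h) * conj (prodM L x y) := by
      intro L hL h x y
      induction L with
      | nil => simp
      | cons q L ihL =>
        rw [List.map_cons, prodM_cons, prodM_cons, prodM_cons, ihL (fun r hr => hL r (by simp [hr])),
          hlin q.1 (hL q (by simp)) y h, map_mul]
        simp only [Dl, add_assoc]
        ring
    have e1 : ∀ h, (𝔼 x, 𝔼 y, (f (x + T1.eval (y + h)) * prodM M1 x (y + h)) *
        conj (f (x + T1.eval y) * prodM M1 x y)) = Lam T1 (Dl (T1.coeff 1 * h) f) (N h) := by
      intro h
      refine ex_congr fun x => ex_congr fun y => ?_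
      rw [hN, hpr M1 hM1d, hlin T1 dT1.le, map_mul]
      simp only [Dl, add_assoc]
      ring
    have c0 : T1.coeff 1 ≠ 0 := by
      rw [← dT1]
      simp only [coeff_natDegree, ne_eq, leadingCoeff_eq_zero]
      rintro h; rw [h] at dT1; simp at dT1
    rw [e0]
    have v := vdC p.2 (hM p (by simp)).1 (fun x y => f (x + T1.eval y) * prodM M1 x y)
    simp only [e1] at v
    rw [show 2 * 2 ^ (n + 1) = 2 * (2 * 2 ^ n) by ring, pow_mul]
    calc _ ≤ (𝔼 h, ‖Lam T1 (Dl (T1.coeff 1 * h) f) (N h)‖) ^ (2 * 2 ^ n) :=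
          pow_le_pow_left₀ (by positivity) v _
      _ ≤ 𝔼 h, ‖Lam T1 (Dl (T1.coeff 1 * h) f) (N h)‖ ^ (2 * 2 ^ n) :=
          expect_pow_le' _ (fun _ => norm_nonneg _) _
      _ ≤ 𝔼 h, gowers n (Dl (T1.coeff 1 * h) f) := by
          refine ex_mono fun h => ?_
          have := ih T1 (N h) (by simpa [hN, hM1, shiftM] using hlen) ?_ _ (hf.Dl (T1.coeff 1 * h))
          · simpa using this
          · intro q hq
            simp only [hN, List.mem_map] at hq
            obtain ⟨r, hr, rfl⟩ := hq
            exact ⟨(hM1b r hr).1.Dl _, (hM1b r hr).2⟩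
      _ = gowers (n + 1) f := ex_scale (fun a => gowers n (Dl a f)) c0
      _ = _ := by simp

lemma claim_one : Claim 1 := by
  intro n
  refine ⟨2 * 2 ^ n, fun F _ _ hF T M hM => ?_⟩
  have h := lin_ctl M.length T M rfl fun p hp =>
    ⟨(hM.2 p hp).1, le_antisymm (hM.2 p hp).2.2 (hM.2 p hp).2.1⟩
  have h1 : 2 ^ M.length ≤ 2 ^ n := Nat.pow_le_pow_right (by norm_num) hM.1
  have h2 : n < 2 ^ n := Nat.lt_two_pow_self
  have := hM.1
  refine h.to_Ctl' le_rfl (fun p hp => (hM.2 p hp).1) (by omega) (by omega) (by positivity)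

lemma claim_zero : Claim 0 := by
  intro n
  refine ⟨2, fun F _ _ hF T M hM => ?_⟩
  have : M = [] := by
    rcases M with _ | ⟨p, M⟩
    · rfl
    · have := hM.2 p (by simp); omega
  subst this
  have h := lin_ctl 0 T [] rfl (by simp)
  exact h.to_Ctl' le_rfl (by simp) (by norm_num) (by norm_num) (by norm_num)

section facts
variable {F : Type} [Field F] [Fintype F]

lemma taylor_coeff_pred (T : F[X]) (D : ℕ) (hD : 1 ≤ D) (hT : T.natDegree = D) (h : F) :
    (taylor h T).coeff (D - 1) = T.coeff (D - 1) + D * T.coeff D * h := by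
  rw [taylor_coeff]
  have := natDegree_hasseDeriv_le T (D - 1)
  rw [eval_eq_sum_range' (n := 2) (by omega)]
  simp only [Finset.sum_range_succ, Finset.sum_range_zero, hasseDeriv_coeff]
  obtain ⟨d, rfl⟩ : ∃ d, D = d + 1 := ⟨D - 1, by omega⟩
  simp [add_comm 1 d]

lemma bad_sub (T Q : F[X]) (D : ℕ) (hD : 2 ≤ D) (hDF : (D : F) ≠ 0) (hT : T.natDegree = D)
    {h h' : F} (h1 : (taylor h T - Q).natDegree = 0) (h2 : (taylor h' T - Q).natDegree = 0) :
    h = h' := by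
  have c1 : (taylor h T - Q).coeff (D - 1) = 0 := coeff_eq_zero_of_natDegree_lt (by omega)
  have c2 : (taylor h' T - Q).coeff (D - 1) = 0 := coeff_eq_zero_of_natDegree_lt (by omega)
  rw [coeff_sub, taylor_coeff_pred T D (by omega) hT] at c1 c2
  have hl : T.coeff D ≠ 0 := by
    rw [← hT]; simp only [coeff_natDegree, ne_eq, leadingCoeff_eq_zero]
    rintro rfl; simp at hT; omega
  have : (D * T.coeff D) * (h - h') = 0 := by linear_combination c1 - c2
  rcases mul_eq_zero.1 this with h | h
  · exact absurd h (mul_ne_zero hDF hl)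
  · exact sub_eq_zero.1 h

open Classical in
lemma card_bad (L : List F[X]) (P : F → F[X] → Prop)
    (h : ∀ Q ∈ L, ∀ a b, P a Q → P b Q → a = b) :
    (Finset.univ.filter fun a => ∃ Q ∈ L, P a Q).card ≤ L.length := by
  induction L with
  | nil => simp
  | cons Q L ih =>
    have e : (Finset.univ.filter fun a => ∃ R ∈ Q :: L, P a R) ⊆
        (Finset.univ.filter fun a => P a Q) ∪ (Finset.univ.filter fun a => ∃ R ∈ L, P a R) := by
      intro a
      simp
    refine (Finset.card_le_card e).trans ((Finset.card_union_le _ _).trans ?_)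
    have h1 : (Finset.univ.filter fun a => P a Q).card ≤ 1 := by
      rw [Finset.card_le_one]
      intro a ha b hb
      exact h Q (by simp) a b (by simpa using ha) (by simpa using hb)
    have := ih fun R hR => h R (by simp [hR])
    simp only [List.length_cons]
    omega

end facts

end pet2
end Pel



namespace Pel

section pet3

def Inner (D : ℕ) (v : Fin (D + 1) → ℕ) : Prop :=
  ∀ n : ℕ, ∃ N : ℕ, ∀ (F : Type) [Field F] [Fintype F],
  (∀ j : ℕ, 1 ≤ j → j ≤ D → (j : F) ≠ 0) → ∀ (T : F[X]) (M : List (F[X] × (F → ℂ))),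
    M.length ≤ n → T.natDegree = D →
    (∀ p ∈ M, Bd p.2 ∧ p.1.natDegree ≤ D ∧ 1 ≤ (T - p.1).natDegree) →
    ∀ S : ℕ → Finset F, (∀ j : Fin (D + 1), (S j).card ≤ v j) →
    (∀ Q ∈ T :: M.map Prod.fst, 1 ≤ Q.natDegree → Q.leadingCoeff ∈ S Q.natDegree) →
    Ctl' N T M

def newv {D : ℕ} (n : ℕ) (v : Fin (D + 1) → ℕ) (e : Fin (D + 1)) : Fin (D + 1) → ℕ :=
  fun j => if j < e then 2 * n + 2 else if j = e then v e - 1 else v j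

lemma inner_all (D : ℕ) (hD : 2 ≤ D) (hC : Claim (D - 1)) (v : Fin (D + 1) → ℕ) : Inner D v := by
  classical
  have wf : WellFounded (Pi.Lex (fun a b : Fin (D + 1) => a > b) (fun {i} (a b : ℕ) => a < b)) :=
    Pi.Lex.wellFounded (α := fun _ : Fin (D + 1) => ℕ) _ fun _ => Nat.lt_wfRel.wf
  induction v using wf.induction with
  | _ v ih =>
  intro n
  have hN : ∀ e : Fin (D + 1), ∃ N : ℕ, 1 ≤ v e → ∀ (F : Type) [Field F] [Fintype F],
      (∀ j : ℕ, 1 ≤ j → j ≤ D → (j : F) ≠ 0) → ∀ (T : F[X]) (M : List (F[X] × (F → ℂ))),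
        M.length ≤ 2 * n + 1 → T.natDegree = D →
        (∀ p ∈ M, Bd p.2 ∧ p.1.natDegree ≤ D ∧ 1 ≤ (T - p.1).natDegree) →
        ∀ S : ℕ → Finset F, (∀ j : Fin (D + 1), (S j).card ≤ newv n v e j) →
        (∀ Q ∈ T :: M.map Prod.fst, 1 ≤ Q.natDegree → Q.leadingCoeff ∈ S Q.natDegree) →
        Ctl' N T M := by
    intro e
    by_cases he : 1 ≤ v e
    · have hlt : Pi.Lex (fun a b : Fin (D + 1) => a > b) (fun {i} (a b : ℕ) => a < b) (newv n v e) v := by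
        refine ⟨e, fun j hj => ?_, ?_⟩
        · have h1 : ¬ j < e := not_lt.2 (le_of_lt hj)
          have h2 : j ≠ e := ne_of_gt hj
          simp [newv, h1, h2]
        · simp [newv]; omega
      obtain ⟨N, hN⟩ := ih _ hlt (2 * n + 1)
      exact ⟨N, fun _ => hN⟩
    · exact ⟨0, fun h => absurd h he⟩
  choose Nf hNe using hN
  obtain ⟨NA, hNA⟩ := hC (2 * n + 1)
  set N : ℕ := NA + ∑ e, Nf e with hNdef
  have hNA' : NA ≤ N := Nat.le_add_right _ _
  have hNe' : ∀ e, Nf e ≤ N := fun e =>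
    (Finset.single_le_sum (f := Nf) (fun _ _ => Nat.zero_le _) (Finset.mem_univ e)).trans
      (Nat.le_add_left _ _)
  set K := N * 2 ^ N with hK
  set Cc : ℝ := (N + 1 : ℝ) ^ (2 ^ N) with hCc
  refine ⟨N + 2 * K + ((N + 1) ^ (2 ^ N) + (n + 1)), fun F _ _ hF T M hlen hT hM S hS hSM => ?_⟩
  have hMb : ∀ p ∈ M, Bd p.2 := fun p hp => (hM p hp).1
  have main : Ctl N (2 * K) (Cc + (n + 1 : ℕ)) T M := by
    intro f hf
    set M1 := nc M with hM1
    have hM1len : M1.length ≤ n := (length_nc M).trans hlen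
    set Bs : Finset F := Finset.univ.filter fun h => ∃ Q ∈ T :: M1.map Prod.fst,
      (taylor h T - Q).natDegree = 0 with hBs
    have hBc : Bs.card ≤ n + 1 := by
      have := card_bad (T :: M1.map Prod.fst) (fun h Q => (taylor h T - Q).natDegree = 0)
        (fun Q hQ a b ha hb => bad_sub T Q D hD (hF D (by omega) le_rfl) hT ha hb)
      have h2 : (T :: M1.map Prod.fst).length ≤ n + 1 := by simpa using hM1len
      refine le_trans (le_of_eq ?_) (this.trans h2)
      rw [hBs]
      congr!
    refine avg_step hMb (n + 1) Bs hBc f hf (by positivity) fun h hh => ?_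
    change Ctl' N _ _
    have hstepb : ∀ p ∈ stepM T f h M1, Bd p.2 := by
      intro p hp
      rcases mem_stepM hp with rfl | ⟨q, hq, rfl | rfl⟩
      · exact hf.cj
      · exact hMb q (mem_nc.1 hq).1
      · exact (hMb q (mem_nc.1 hq).1).cj
    have hstepl : (stepM T f h M1).length ≤ 2 * n + 1 := by
      rw [length_stepM]; omega
    have hnb : ∀ Q ∈ T :: M1.map Prod.fst, 1 ≤ (taylor h T - Q).natDegree := by
      intro Q hQ
      by_contra hlt
      exact hh (by simp only [hBs, Finset.mem_filter, Finset.mem_univ, true_and]; exact ⟨Q, hQ, by omega⟩)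
    have hstepnc : ∀ p ∈ stepM T f h M1, 1 ≤ (taylor h T - p.1).natDegree := by
      intro p hp
      rcases mem_stepM hp with rfl | ⟨q, hq, rfl | rfl⟩
      · exact hnb T (by simp)
      · simp only
        rw [← map_sub, natDegree_taylor]
        exact (hM q (mem_nc.1 hq).1).2.2
      · exact hnb q.1 (List.mem_cons_of_mem _ (List.mem_map_of_mem hq))
    have hTD : (taylor h T).natDegree = D := by rw [natDegree_taylor, hT]
    have tcoef : ∀ Q : F[X], Q.natDegree ≤ D → (taylor h Q).coeff D = Q.coeff D := by
      intro Q hQ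
      rcases hQ.lt_or_eq with hlt | heq
      · rw [coeff_eq_zero_of_natDegree_lt (by rw [natDegree_taylor]; exact hlt),
          coeff_eq_zero_of_natDegree_lt hlt]
      · rw [← heq, coeff_taylor_natDegree]; rfl
    have hTc : T.coeff D ≠ 0 := by
      rw [← hT]; simp only [coeff_natDegree, ne_eq, leadingCoeff_eq_zero]
      rintro rfl; simp at hT; omega
    by_cases hcase : ∀ p ∈ M1, p.1.coeff D = T.coeff D
    · -- Case A
      refine (hNA F (fun j h1 h2 => hF j h1 (by omega)) (taylor h T) (stepM T f h M1)
        ⟨hstepl, fun p hp => ⟨hstepb p hp, hstepnc p hp, ?_⟩⟩).mono hNA' hstepb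
      have key : ∀ Q : F[X], Q.natDegree ≤ D → Q.coeff D = T.coeff D →
          (taylor h T - Q).natDegree ≤ D - 1 := by
        intro Q h1 h2
        apply natDegree_le_pred
        · exact (natDegree_sub_le _ _).trans (by rw [hTD]; simpa using h1)
        · rw [coeff_sub, tcoef T hT.le, h2, sub_self]
      rcases mem_stepM hp with rfl | ⟨q, hq, rfl | rfl⟩
      · exact key T hT.le rfl
      · have := (hM q (mem_nc.1 hq).1).2.1
        exact key _ (by rw [natDegree_taylor]; exact this) (by rw [tcoef _ this]; exact hcase q hq)
      · exact key _ (hM q (mem_nc.1 hq).1).2.1 (hcase q hq)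
    · -- Case B
      push Not at hcase
      obtain ⟨p0, hp0, hp0'⟩ := hcase
      have hex : ∃ d : ℕ, ∃ p ∈ M1, p.1.coeff D ≠ T.coeff D ∧ p.1.natDegree = d :=
        ⟨_, p0, hp0, hp0', rfl⟩
      obtain ⟨pb, hpb, hpbc, hpbd⟩ := Nat.find_spec hex
      set e := Nat.find hex with he
      set b := pb.1 with hb
      have hbD : b.natDegree ≤ D := (hM pb (mem_nc.1 hpb).1).2.1
      have he1 : 1 ≤ e := by
        rw [← hpbd]; exact Nat.one_le_iff_ne_zero.2 (mem_nc.1 hpb).2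
      have heD : e ≤ D := by rw [← hpbd]; exact hbD
      have hM1e : ∀ p ∈ M1, e ≤ p.1.natDegree := by
        intro p hp
        by_cases hc : p.1.coeff D = T.coeff D
        · have : D ≤ p.1.natDegree := le_natDegree_of_ne_zero (by rw [hc]; exact hTc)
          omega
        · exact Nat.find_min' hex ⟨p, hp, hc, rfl⟩
      -- all members of the big list
      have hall : ∀ Q ∈ taylor h T :: (stepM T f h M1).map Prod.fst,
          e ≤ Q.natDegree ∧ Q.natDegree ≤ D ∧ Q.leadingCoeff ∈ S Q.natDegree := by
        have k0 : ∀ Q ∈ T :: M1.map Prod.fst, e ≤ Q.natDegree ∧ Q.natDegree ≤ D ∧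
            Q.leadingCoeff ∈ S Q.natDegree := by
          intro Q hQ
          rcases List.mem_cons.1 hQ with rfl | hQ
          · exact ⟨by omega, hT.le, hSM _ (by simp) (by omega)⟩
          · obtain ⟨p, hp, rfl⟩ := List.mem_map.1 hQ
            have := hM1e p hp
            have hpM := (mem_nc.1 hp).1
            exact ⟨this, (hM p hpM).2.1, hSM _
              (List.mem_cons_of_mem _ (List.mem_map_of_mem hpM)) (by omega)⟩
        have k1 : ∀ Q ∈ T :: M1.map Prod.fst, e ≤ (taylor h Q).natDegree ∧
            (taylor h Q).natDegree ≤ D ∧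
            (taylor h Q).leadingCoeff ∈ S (taylor h Q).natDegree := by
          intro Q hQ
          rw [natDegree_taylor, leadingCoeff_taylor]
          exact k0 Q hQ
        intro Q hQ
        rcases List.mem_cons.1 hQ with rfl | hQ
        · exact k1 T (by simp)
        · obtain ⟨p, hp, rfl⟩ := List.mem_map.1 hQ
          rcases mem_stepM hp with rfl | ⟨q, hq, rfl | rfl⟩
          · exact k0 T (by simp)
          · exact k1 q.1 (List.mem_cons_of_mem _ (List.mem_map_of_mem hq))
          · exact k0 q.1 (List.mem_cons_of_mem _ (List.mem_map_of_mem hq))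
      set ef : Fin (D + 1) := ⟨e, by omega⟩ with hef
      have hbS : b.leadingCoeff ∈ S e := by
        have := hSM b (List.mem_cons_of_mem _ (List.mem_map_of_mem (mem_nc.1 hpb).1)) (by omega)
        rwa [hpbd] at this
      have hve : 1 ≤ v ef := (Finset.card_pos.2 ⟨_, hbS⟩).trans_le (hS ef)
      set big := (taylor h T - b) :: (shiftM b (stepM T f h M1)).map Prod.fst with hbig
      have hbigmem : ∀ Q' ∈ big, ∃ Q ∈ taylor h T :: (stepM T f h M1).map Prod.fst, Q' = Q - b := by
        intro Q' hQ'
        rcases List.mem_cons.1 hQ' with rfl | hQ'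
        · exact ⟨_, by simp, rfl⟩
        · obtain ⟨p, hp, rfl⟩ := List.mem_map.1 hQ'
          obtain ⟨q, hq, rfl⟩ := List.mem_map.1 hp
          exact ⟨q.1, List.mem_cons_of_mem _ (List.mem_map_of_mem hq), rfl⟩
      have hbiglen : big.length ≤ 2 * n + 2 := by
        simp [hbig, shiftM]; omega
      set S' : ℕ → Finset F := fun j => if j < e then (big.map leadingCoeff).toFinset
        else if j = e then ((S e).erase b.leadingCoeff).image (fun a => a - b.leadingCoeff) else S j
        with hS'
      have hS'c : ∀ j : Fin (D + 1), (S' j).card ≤ newv n v ef j := by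
        intro j
        simp only [hS', newv, Fin.lt_def, Fin.ext_iff, hef]
        split_ifs with h1 h2
        · exact (List.toFinset_card_le _).trans (by simpa using hbiglen)
        · refine Finset.card_image_le.trans ?_
          rw [Finset.card_erase_of_mem hbS]
          exact Nat.sub_le_sub_right (hS ef) 1
        · exact hS j
      have hS'm : ∀ Q ∈ big, 1 ≤ Q.natDegree → Q.leadingCoeff ∈ S' Q.natDegree := by
        intro Q' hQ' hQ'1
        obtain ⟨Q, hQ, rfl⟩ := hbigmem Q' hQ'
        obtain ⟨a1, a2, a3⟩ := hall Q hQ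
        simp only [hS']
        split_ifs with h1 h2
        · exact List.mem_toFinset.2 (List.mem_map_of_mem hQ')
        · have hQe : Q.natDegree = e := by
            by_contra hne
            have : (Q - b).natDegree = Q.natDegree :=
              natDegree_sub_eq_left_of_natDegree_lt (by omega)
            omega
          have hlc : (Q - b).leadingCoeff = Q.leadingCoeff - b.leadingCoeff := by
            simp only [leadingCoeff, h2, coeff_sub, hQe, hpbd]
          have hne : (Q - b).leadingCoeff ≠ 0 := by
            rw [Ne, leadingCoeff_eq_zero]
            intro h0; rw [h0] at hQ'1; simp at hQ'1
          rw [hlc] at hne ⊢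
          refine Finset.mem_image.2 ⟨Q.leadingCoeff, Finset.mem_erase.2 ⟨sub_ne_zero.1 hne, ?_⟩, rfl⟩
          rwa [hQe] at a3
        · have hgt : e < (Q - b).natDegree := by omega
          have hQgt : b.natDegree < Q.natDegree := by
            have := natDegree_sub_le Q b
            rcases le_total Q.natDegree b.natDegree with hle | hle
            · rw [max_eq_right hle] at this; omega
            · rw [max_eq_left hle] at this; omega
          have h4 : (Q - b).natDegree = Q.natDegree := natDegree_sub_eq_left_of_natDegree_lt hQgt
          have h5 : (Q - b).leadingCoeff = Q.leadingCoeff := by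
            rw [leadingCoeff, h4, coeff_sub, coeff_eq_zero_of_natDegree_lt hQgt, sub_zero]; rfl
          rw [h4, h5]; exact a3
      have hTb : (taylor h T - b).natDegree = D := by
        refine natDegree_eq_of_le_of_coeff_ne_zero ?_ ?_
        · exact (natDegree_sub_le _ _).trans (by rw [hTD]; simpa using hbD)
        · rw [coeff_sub, tcoef T hT.le]
          exact sub_ne_zero.2 (Ne.symm hpbc)
      have hsb : ∀ p ∈ shiftM b (stepM T f h M1), Bd p.2 := by
        intro p hp
        obtain ⟨q, hq, rfl⟩ := List.mem_map.1 hp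
        exact hstepb q hq
      have fin := (hNe ef hve F hF (taylor h T - b) (shiftM b (stepM T f h M1))
        (by simpa [shiftM] using hstepl) hTb (by
          intro p hp
          refine ⟨hsb p hp, ?_, ?_⟩
          · obtain ⟨q, hq, rfl⟩ := List.mem_map.1 hp
            have := (hall q.1 (List.mem_cons_of_mem _ (List.mem_map_of_mem hq))).2.1
            exact (natDegree_sub_le _ _).trans (max_le this hbD)
          · obtain ⟨q, hq, rfl⟩ := List.mem_map.1 hp
            have := hstepnc q hq
            simpa using this) S' hS'c hS'm).mono (hNe' ef) hsb
      intro g hg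
      rw [Lam_shift b]
      exact fin g hg
  refine main.to_Ctl' (by positivity) hMb (by omega) (by omega) ?_
  rw [hCc]; push_cast
  have : (0:ℝ) ≤ N + 2 * K := by positivity
  linarith

lemma claim_all (D : ℕ) : Claim D := by
  classical
  induction D with
  | zero => exact claim_zero
  | succ D ih =>
  rcases Nat.eq_zero_or_pos D with rfl | hDpos
  · exact claim_one
  intro n
  obtain ⟨N1, hN1⟩ := ih n
  obtain ⟨N2, hN2⟩ := inner_all (D + 1) (by omega) (by simpa using ih) (fun _ => n + 1) n
  refine ⟨max N1 N2, fun F _ _ hF T M hM => ?_⟩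
  have hMb : ∀ p ∈ M, Bd p.2 := fun p hp => (hM.2 p hp).1
  by_cases hc : ∀ p ∈ M, (T - p.1).natDegree ≤ D
  · exact (hN1 F (fun j h1 h2 => hF j h1 (by omega)) T M ⟨hM.1, fun p hp =>
      ⟨hMb p hp, (hM.2 p hp).2.1, hc p hp⟩⟩).mono (le_max_left _ _) hMb
  · push Not at hc
    obtain ⟨c, hcM, hcD⟩ := hc
    have hd : (T - c.1).natDegree = D + 1 := le_antisymm (hM.2 c hcM).2.2 hcD
    have hsb : ∀ p ∈ shiftM c.1 M, Bd p.2 := by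
      intro p hp
      obtain ⟨q, hq, rfl⟩ := List.mem_map.1 hp
      exact hMb q hq
    have fin := (hN2 F hF (T - c.1) (shiftM c.1 M) (by simpa [shiftM] using hM.1) hd (by
      intro p hp
      refine ⟨hsb p hp, ?_, ?_⟩
      · obtain ⟨q, hq, rfl⟩ := List.mem_map.1 hp
        have h1 := (hM.2 q hq).2.2
        have : q.1 - c.1 = (T - c.1) - (T - q.1) := by ring
        simp only
        rw [this]
        exact (natDegree_sub_le _ _).trans (max_le hd.le h1)
      · obtain ⟨q, hq, rfl⟩ := List.mem_map.1 hp
        have h1 := (hM.2 q hq).2.1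
        simpa using h1)
      (fun j => (((T - c.1) :: (shiftM c.1 M).map Prod.fst).map leadingCoeff).toFinset)
      (fun j => (List.toFinset_card_le _).trans (by simpa [shiftM] using hM.1))
      (fun Q hQ _ => List.mem_toFinset.2 (List.mem_map_of_mem hQ))).mono (le_max_right N1 N2) hsb
    intro g hg
    rw [Lam_shift c.1]
    exact fin g hg

end pet3
end Pel



namespace Pel

section comb

noncomputable def dq (F : Type) [Fintype F] : ℝ := (Fintype.card F : ℝ)⁻¹

lemma dq_pos (F : Type) [Field F] [Fintype F] : 0 < dq F := by
  have : (0 : ℝ) < Fintype.card F := by exact_mod_cast Fintype.card_pos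
  exact inv_pos.2 this

lemma dq_le (F : Type) [Field F] [Fintype F] : dq F ≤ 1 := by
  have : (1 : ℝ) ≤ Fintype.card F := by exact_mod_cast Fintype.card_pos
  exact inv_le_one_of_one_le₀ this

def CH (d : ℕ) (F : Type) [Field F] : Prop := ∀ j : ℕ, 1 ≤ j → j ≤ d → (j : F) ≠ 0

lemma pow_le_self' {x : ℝ} (h0 : 0 ≤ x) (h1 : x ≤ 1) {n : ℕ} (hn : 1 ≤ n) : x ^ n ≤ x := by
  simpa using pow_le_pow_of_le_one h0 h1 hn

lemma add_pow_le2 {a b : ℝ} (ha : 0 ≤ a) (hb : 0 ≤ b) (n : ℕ) :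
    (a + b) ^ n ≤ 2 ^ n * (a ^ n + b ^ n) := by
  rcases le_total a b with h | h
  · calc (a + b) ^ n ≤ (2 * b) ^ n := pow_le_pow_left₀ (by positivity) (by linarith) n
      _ = 2 ^ n * b ^ n := mul_pow _ _ _
      _ ≤ _ := by gcongr; linarith [pow_nonneg ha n]
  · calc (a + b) ^ n ≤ (2 * a) ^ n := pow_le_pow_left₀ (by positivity) (by linarith) n
      _ = 2 ^ n * a ^ n := mul_pow _ _ _
      _ ≤ _ := by gcongr; linarith [pow_nonneg hb n]

/-- chaining of polynomial bounds -/
lemma chain {K K' : ℕ} {A A' δ X Y Z : ℝ} (hK' : 1 ≤ K') (hA : 0 ≤ A) (hA' : 0 ≤ A')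
    (hδ : 0 ≤ δ) (hδ1 : δ ≤ 1) (hX : 0 ≤ X) (hY : 0 ≤ Y) (hZ : 0 ≤ Z)
    (h1 : X ^ K ≤ A * (Y + δ)) (h2 : Y ^ K' ≤ A' * (Z + δ)) :
    X ^ (K * K') ≤ (A ^ K' * 2 ^ K' * (A' + 1)) * (Z + δ) := by
  rw [pow_mul]
  calc (X ^ K) ^ K' ≤ (A * (Y + δ)) ^ K' := pow_le_pow_left₀ (by positivity) h1 _
    _ = A ^ K' * (Y + δ) ^ K' := mul_pow _ _ _
    _ ≤ A ^ K' * (2 ^ K' * (Y ^ K' + δ ^ K')) := by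
        gcongr; exact add_pow_le2 hY hδ K'
    _ ≤ A ^ K' * (2 ^ K' * (A' * (Z + δ) + (Z + δ))) := by
        gcongr
        exact (pow_le_self' hδ hδ1 hK').trans (by linarith)
    _ = _ := by ring

lemma gowers_cj {F : Type} [Field F] [Fintype F] (s : ℕ) (f : F → ℂ) :
    gowers s (cj f) = gowers s f := by
  induction s generalizing f with
  | zero =>
    simp only [gowers, cj]
    rw [← ex_conj, RCLike.norm_conj]
  | succ s ih =>
    simp only [gowers]
    refine ex_congr fun a => ?_
    rw [← ih (Dl a f)]
    congr 1
    funext x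
    simp [Dl, cj]

lemma gowers_chain (s K0 : ℕ) (C0 : ℝ) (hK0 : 1 ≤ K0) (hC0 : 0 ≤ C0) :
    ∃ (K : ℕ) (A : ℝ), 1 ≤ K ∧ 0 ≤ A ∧ ∀ (F : Type) [Field F] [Fintype F] (e : AddChar F ℂ)
      (he : e.IsPrimitive) (ι : Type) [Fintype ι] (p : ι → F → F) (ε : ℝ) (hε : 0 ≤ ε)
      (hε' : ε ^ K0 ≤ C0 * dq F)
      (H : ∀ g : ι → F → ℂ, (∀ i, Bd (g i)) → ∀ φ : F, φ ≠ 0 →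
        ‖𝔼 x, 𝔼 y, (∏ i, g i (x + p i y)) * e (φ * x)‖ ≤ ε)
      (w : F → ℂ) (hw : ∀ y, ‖w y‖ = 1)
      (f : ι → F → ℂ) (hf : ∀ i, Bd (f i)) (G : F → ℂ)
      (hG : ∀ x, G x = 𝔼 y, w y * ∏ i, f i (x + p i y)),
      gowers (s + 1) G ^ K ≤ A * (gowers 1 G + dq F) := by
  induction s with
  | zero =>
    refine ⟨1, 1, le_rfl, zero_le_one, fun F _ _ e he ι _ p ε hε hε' H w hw f hf G hG => ?_⟩
    have := dq_pos F
    simp only [pow_one, one_mul, zero_add]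
    linarith
  | succ r ih =>
    obtain ⟨K, A, hK, hA, ih⟩ := ih
    set m := 2 ^ (r + 1) * K0 with hm
    refine ⟨(2 * 2 ^ (r + 1) * m) * K, (2 ^ m * (1 + C0 ^ (2 * 2 ^ (r + 1)))) ^ K * 2 ^ K * (A + 1),
      ?_, by positivity, fun F _ _ e he ι _ p ε hε hε' H w hw f hf G hG => ?_⟩
    · exact Nat.one_le_iff_ne_zero.2 (by positivity)
    have hGb : Bd G := fun x => by
      rw [hG]
      exact ex_norm_le_one fun y => norm_mul_le_one (hw y).le (prod_bd fun i => hf i _)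
    have d0 := dq_pos F
    have d1 := dq_le F
    refine chain hK (by positivity) hA d0.le d1 (gowers_nonneg _ _) (gowers_nonneg (r + 1) G)
      (gowers_nonneg _ _) ?_ (ih F e he ι p ε hε hε' H w hw f hf G hG)
    obtain ⟨τ, hτ, h1, h2⟩ := degree_lower e he p ε hε H r w hw f hf G hG
    have h3 : τ ^ m ≤ gowers (r + 1) G := by
      rw [hm, pow_mul]
      exact (pow_le_pow_left₀ (by positivity) h2 K0).trans
        (pow_le_self' (gowers_nonneg _ _) (gowers_le_one _ hGb) hK0)
    have h4 : (ε ^ 2) ^ m ≤ C0 ^ (2 * 2 ^ (r + 1)) * dq F := by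
      have : (ε ^ 2) ^ m = (ε ^ K0) ^ (2 * 2 ^ (r + 1)) := by
        rw [← pow_mul, ← pow_mul, hm]; congr 1; ring
      rw [this]
      refine (pow_le_pow_left₀ (by positivity) hε' _).trans ?_
      rw [mul_pow]
      gcongr
      exact pow_le_self' d0.le d1 (Nat.one_le_iff_ne_zero.2 (by positivity))
    rw [pow_mul]
    have g0 := gowers_nonneg (r + 1) G
    calc _ ≤ (τ + ε ^ 2) ^ m := pow_le_pow_left₀ (pow_nonneg (gowers_nonneg _ _) _) h1 m
      _ ≤ 2 ^ m * (τ ^ m + (ε ^ 2) ^ m) := add_pow_le2 hτ (by positivity) m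
      _ ≤ 2 ^ m * (gowers (r + 1) G + C0 ^ (2 * 2 ^ (r + 1)) * dq F) := by gcongr
      _ ≤ 2 ^ m * ((1 + C0 ^ (2 * 2 ^ (r + 1))) * (gowers (r + 1) G + dq F)) := by
          gcongr
          have : 0 ≤ C0 ^ (2 * 2 ^ (r + 1)) := by positivity
          nlinarith [mul_nonneg this g0]
      _ = _ := by ring

/-- Weyl bound -/
lemma weyl {F : Type} [Field F] [Fintype F] (e : AddChar F ℂ) (he : e.IsPrimitive) (D : ℕ) :
    CH (D + 1) F → ∀ R : F[X], R.natDegree = D + 1 →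
    ‖𝔼 y, e (R.eval y)‖ ^ (2 ^ D) ≤ D * dq F := by
  classical
  induction D with
  | zero =>
    intro hF R hR
    have c0 : R.coeff 1 ≠ 0 := by
      have : R.coeff R.natDegree ≠ 0 := by
        simp only [coeff_natDegree, ne_eq, leadingCoeff_eq_zero]
        rintro h; rw [h] at hR; simp at hR
      rwa [hR] at this
    have h1 : (𝔼 y, e (R.eval y)) = 0 := by
      have e1 : ∀ y, e (R.eval y) = e (R.coeff 0) * e (R.coeff 1 * y) := by
        intro y
        rw [← AddChar.map_add_eq_mul]
        congr 1
        conv_lhs => rw [eq_X_add_C_of_natDegree_le_one (show R.natDegree ≤ 1 by omega)]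
        simp; ring
      simp only [e1]
      rw [← Finset.mul_expect, ex_scale (fun y => e y) c0]
      have : e ≠ 1 := by
        have := he (one_ne_zero)
        simpa using this
      rw [Fintype.expect_eq_sum_div_card, AddChar.sum_eq_zero_of_ne_one this]
      simp
    rw [h1]; simp
  | succ D ih =>
    intro hF R hR
    have ih' := ih fun j h1 h2 => hF j h1 (by omega)
    have v := vdC (F := F) (fun _ => 1) (fun _ => by simp) (fun _ y => e (R.eval y))
    simp only [one_mul, Fintype.expect_const] at v
    have e1 : ∀ h y, e (R.eval (y + h)) * conj (e (R.eval y)) = e ((taylor h R - R).eval y) := by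
      intro h y
      rw [e_conj, ← AddChar.map_add_eq_mul, eval_sub, taylor_eval, sub_eq_add_neg]
    simp only [e1] at v
    have hRc : R.coeff (D + 2) ≠ 0 := by
      have : R.coeff R.natDegree ≠ 0 := by
        simp only [coeff_natDegree, ne_eq, leadingCoeff_eq_zero]
        rintro h; rw [h] at hR; simp at hR
      rwa [hR] at this
    have hdeg : ∀ h : F, h ≠ 0 → (taylor h R - R).natDegree = D + 1 := by
      intro h hh
      refine natDegree_eq_of_le_of_coeff_ne_zero ?_ ?_
      · refine natDegree_le_pred (n := D + 2) ?_ ?_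
        · exact (natDegree_sub_le _ _).trans (by rw [natDegree_taylor, hR]; simp)
        · rw [coeff_sub]
          have := coeff_taylor_natDegree (r := h) (f := R)
          rw [hR] at this
          rw [show D + 2 = D + 1 + 1 by ring, this, leadingCoeff, hR, sub_self]
      · have := taylor_coeff_pred R (D + 1 + 1) (by omega) hR h
        rw [show D + 1 + 1 - 1 = D + 1 by omega] at this
        rw [coeff_sub, this, add_sub_cancel_left]
        exact mul_ne_zero (mul_ne_zero (hF _ (by omega) le_rfl) hRc) hh
    rw [pow_succ 2 D, mul_comm, pow_mul]
    have d0 := dq_pos F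
    calc _ ≤ (𝔼 h, ‖𝔼 y, e ((taylor h R - R).eval y)‖) ^ (2 ^ D) :=
          pow_le_pow_left₀ (by positivity) v _
      _ ≤ 𝔼 h, ‖𝔼 y, e ((taylor h R - R).eval y)‖ ^ (2 ^ D) :=
          expect_pow_le' _ (fun _ => norm_nonneg _) _
      _ ≤ 𝔼 h : F, (D * dq F + if h = 0 then 1 else 0) := by
          refine ex_mono fun h => ?_
          split_ifs with hh
          · have := pow_le_one₀ (n := 2 ^ D) (norm_nonneg _)
              (ex_norm_le_one fun y => (e_norm e ((taylor h R - R).eval y)).le)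
            have : 0 ≤ D * dq F := by positivity
            linarith
          · rw [add_zero]; exact ih' _ (hdeg h hh)
      _ = _ := by
          rw [Finset.expect_add_distrib, Fintype.expect_const, Fintype.expect_eq_sum_div_card]
          simp [dq]
          ring

end comb
end Pel



namespace Pel

section mlem

noncomputable def LamF {F : Type} [Field F] [Fintype F] {k : ℕ} (P : Fin k → F[X])
    (f0 : F → ℂ) (f : Fin k → F → ℂ) (w : F → ℂ) : ℂ :=
  𝔼 x, 𝔼 y, w y * (f0 x * ∏ i, f i (x + (P i).eval y))

lemma LamF_le_one {F : Type} [Field F] [Fintype F] {k : ℕ} (P : Fin k → F[X])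
    {f0 : F → ℂ} {f : Fin k → F → ℂ} {w : F → ℂ} (h0 : Bd f0) (hf : ∀ i, Bd (f i)) (hw : Bd w) :
    ‖LamF P f0 f w‖ ≤ 1 :=
  ex_norm_le_one fun x => ex_norm_le_one fun y =>
    norm_mul_le_one (hw y) (norm_mul_le_one (h0 x) (prod_bd fun i => hf i _))

/-- change of variables depending on y -/
lemma ex_tr {F : Type} [Field F] [Fintype F] (S : F → F → ℂ) (t : F → F) :
    𝔼 x, 𝔼 y, S x y = 𝔼 x, 𝔼 y, S (x + t y) y := by
  rw [Finset.expect_comm, Finset.expect_comm Finset.univ Finset.univ (fun x y => S (x + t y) y)]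
  exact ex_congr fun y => (ex_shift (fun x => S x y) (t y)).symm

lemma prodM_ofFn {F : Type} [Field F] [Fintype F] {k : ℕ} (P : Fin k → F[X])
    (f : Fin k → F → ℂ) (x y : F) :
    prodM (List.ofFn fun i => (P i, f i)) x y = ∏ i, f i (x + (P i).eval y) := by
  simp only [prodM, List.map_ofFn, Function.comp_def]
  rw [List.prod_ofFn]

lemma Mlem (d k K0 : ℕ) (C0 : ℝ) (hK0 : 1 ≤ K0) (hC0 : 0 ≤ C0) :
    ∃ (K : ℕ) (A : ℝ), 1 ≤ K ∧ 0 ≤ A ∧ ∀ (F : Type) [Field F] [Fintype F] (e : AddChar F ℂ)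
      (he : e.IsPrimitive) (hF : CH d F) (P : Fin k → F[X]) (Pl R : F[X])
      (hPd : ∀ i, (P i).natDegree ≤ d) (hPl : Pl.natDegree ≤ d) (hR : R.natDegree ≤ d)
      (n1 : 1 ≤ Pl.natDegree) (n2 : ∀ i, 1 ≤ (Pl - P i).natDegree) (n3 : 1 ≤ (Pl - R).natDegree)
      (H : ∀ (g0 : F → ℂ) (g : Fin k → F → ℂ), Bd g0 → (∀ i, Bd (g i)) → ∀ φ : F, φ ≠ 0 →
        ‖LamF P g0 g (fun y => e ((φ • Pl).eval y))‖ ^ K0 ≤ C0 * dq F)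
      (f0 fl : F → ℂ) (f : Fin k → F → ℂ), Bd f0 → Bd fl → (∀ i, Bd (f i)) →
      ∃ φ : F, ‖𝔼 x, 𝔼 y, e (R.eval y) *
          (f0 x * ((∏ i, f i (x + (P i).eval y)) * fl (x + Pl.eval y)))‖ ^ K ≤
        A * (‖LamF P (fun x => f0 x * e (φ * x)) f (fun y => e ((R + φ • Pl).eval y))‖ + dq F) := by
  obtain ⟨N0, hN0⟩ := claim_all d (k + 2)
  set N := N0 + 1 with hN
  obtain ⟨K2, A2, hK2, hA2, hchain⟩ := gowers_chain N0 K0 C0 hK0 hC0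
  set K1 := N * 2 ^ N with hK1
  set A1 : ℝ := (N + 1 : ℝ) ^ (2 ^ N) with hA1
  have hA1' : 1 ≤ A1 := one_le_pow₀ (by simp)
  refine ⟨2 * K1 * K2, A1 ^ K2 * 2 ^ K2 * (A2 + 1), Nat.one_le_iff_ne_zero.2 (by positivity),
    by positivity, ?_⟩
  intro F _ _ e he hF P Pl R hPd hPl hR n1 n2 n3 H f0 fl f hf0 hfl hf
  have d0 := dq_pos F
  have d1 := dq_le F
  set p : Option (Fin k) → F → F := fun o => o.elim (fun y => - Pl.eval y)
    (fun i y => (P i).eval y - Pl.eval y) with hp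
  set f' : Option (Fin k) → F → ℂ := fun o => o.elim f0 f with hf'
  set w : F → ℂ := fun y => e (R.eval y) with hw
  have hw1 : ∀ y, ‖w y‖ = 1 := fun y => e_norm _ _
  have hf'b : ∀ i, Bd (f' i) := by
    intro i; cases i with
    | none => exact hf0
    | some i => exact hf i
  set G : F → ℂ := fun x => 𝔼 y, w y * ∏ i, f' i (x + p i y) with hG
  have hGb : Bd G := fun x =>
    ex_norm_le_one fun y => norm_mul_le_one (hw1 y).le (prod_bd fun i => hf'b i _)
  have prodO : ∀ (g : Option (Fin k) → F → ℂ) (x y : F), ∏ i, g i (x + Pl.eval y + p i y) =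
      g none x * ∏ i, g (some i) (x + (P i).eval y) := by
    intro g x y
    rw [Fintype.prod_option]
    simp only [hp, Option.elim]
    congr 1
    · congr 1; ring
    · refine Finset.prod_congr rfl fun i _ => ?_
      congr 1; ring
  -- the pairing with G
  have pair : ∀ u : F → ℂ, 𝔼 x, u x * G x =
      𝔼 x, 𝔼 y, w y * (f0 x * ((∏ i, f i (x + (P i).eval y)) * u (x + Pl.eval y))) := by
    intro u
    have : 𝔼 x, u x * G x = 𝔼 x, 𝔼 y, u x * (w y * ∏ i, f' i (x + p i y)) :=
      ex_congr fun x => by rw [hG, Finset.mul_expect]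
    rw [this, ex_tr _ (fun y => Pl.eval y)]
    refine ex_congr fun x => ex_congr fun y => ?_
    rw [prodO f' x y]
    simp only [hf', Option.elim]
    ring
  rw [← pair fl]
  -- epsilon
  set ε : ℝ := (C0 * dq F) ^ ((K0 : ℝ)⁻¹) with hεd
  have hε : 0 ≤ ε := by positivity
  have hε' : ε ^ K0 = C0 * dq F := Real.rpow_inv_natCast_pow (by positivity) (by omega)
  have HH : ∀ g : Option (Fin k) → F → ℂ, (∀ i, Bd (g i)) → ∀ φ : F, φ ≠ 0 →
        ‖𝔼 x, 𝔼 y, (∏ i, g i (x + p i y)) * e (φ * x)‖ ≤ ε := by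
    intro g hg φ hφ
    have := H (fun x => g none x * e (φ * x)) (fun i => g (some i))
      (fun x => norm_mul_le_one (hg _ _) (e_norm _ _).le) (fun i => hg _) φ hφ
    have eq1 : 𝔼 x, 𝔼 y, (∏ i, g i (x + p i y)) * e (φ * x) =
        LamF P (fun x => g none x * e (φ * x)) (fun i => g (some i))
          (fun y => e ((φ • Pl).eval y)) := by
      rw [ex_tr _ (fun y => Pl.eval y)]
      refine ex_congr fun x => ex_congr fun y => ?_
      simp only [prodO g x y, mul_add, AddChar.map_add_eq_mul, eval_smul, smul_eq_mul]
      ring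
    rw [eq1]
    refine le_of_pow_le_pow_left₀ (n := K0) (by omega) hε ?_
    rw [hε']; exact this
  have chn := hchain F e he (Option (Fin k)) p ε hε hε'.le HH w hw1 f' hf'b G (fun x => rfl)
  obtain ⟨φ, hφ⟩ := U2_inverse e he G hGb
  refine ⟨φ, ?_⟩
  set Y := ‖LamF P (fun x => f0 x * e (φ * x)) f (fun y => e ((R + φ • Pl).eval y))‖ with hY
  have hY1 : Y ≤ 1 := LamF_le_one P (fun x => norm_mul_le_one (hf0 _) (e_norm _ _).le) hf
    (fun y => (e_norm _ _).le)
  have hG1 : gowers 1 G ≤ Y := by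
    have eq2 : 𝔼 x, G x * e (φ * x) = LamF P (fun x => f0 x * e (φ * x)) f
        (fun y => e ((R + φ • Pl).eval y)) := by
      have := pair (fun x => e (φ * x))
      have h2 : 𝔼 x, G x * e (φ * x) = 𝔼 x, e (φ * x) * G x := ex_congr fun x => mul_comm _ _
      rw [h2, this]
      refine ex_congr fun x => ex_congr fun y => ?_
      simp only [mul_add, AddChar.map_add_eq_mul, eval_add, eval_smul, smul_eq_mul, hw]
      ring
    rw [eq2] at hφ
    refine hφ.trans ?_
    exact pow_le_self' (norm_nonneg _) hY1 (by norm_num)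
  -- PET
  set M : List (F[X] × (F → ℂ)) := (0, fun x => f0 x * e (-x)) :: (R, fun x => e x) ::
    List.ofFn fun i => (P i, f i) with hM
  have hgood : Good d (k + 2) Pl M := by
    refine ⟨by simp [hM], ?_⟩
    intro q hq
    simp only [hM, List.mem_cons, List.mem_ofFn] at hq
    rcases hq with rfl | rfl | ⟨i, rfl⟩
    · exact ⟨fun x => norm_mul_le_one (hf0 _) (e_norm _ _).le, by simpa using n1, by simpa using hPl⟩
    · exact ⟨fun x => (e_norm _ _).le, n3, (natDegree_sub_le _ _).trans (max_le hPl hR)⟩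
    · exact ⟨hf i, n2 i, (natDegree_sub_le _ _).trans (max_le hPl (hPd i))⟩
  have pet := (hN0 F hF Pl M hgood).mono (show N0 ≤ N by omega) (fun q hq => (hgood.2 q hq).1)
    (cj G) hGb.cj
  rw [gowers_cj, ← hK1, ← hA1] at pet
  have eq3 : Lam Pl (cj G) M = ((𝔼 x, ‖G x‖ ^ 2 : ℝ) : ℂ) := by
    rw [Complex.ofReal_expect]
    have h3 : ∀ x, ((‖G x‖ ^ 2 : ℝ) : ℂ) = cj G x * G x := by
      intro x; push_cast; rw [← Complex.mul_conj', mul_comm]; rfl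
    simp only [h3]
    rw [pair (cj G)]
    refine ex_congr fun x => ex_congr fun y => ?_
    simp only [hM, prodM_cons, prodM_ofFn, eval_zero, add_zero]
    have : e (-x) * e (x + R.eval y) = w y := by
      rw [← AddChar.map_add_eq_mul, neg_add_cancel_left]
    rw [← this]
    ring
  rw [eq3, Complex.norm_real, Real.norm_of_nonneg (ex_nonneg fun x => by positivity)] at pet
  have cs : ‖𝔼 x, fl x * G x‖ ^ 2 ≤ 𝔼 x, ‖G x‖ ^ 2 := by
    have : ‖𝔼 x, fl x * G x‖ ≤ 𝔼 x, ‖G x‖ := by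
      refine (norm_ex_le _).trans (ex_mono fun x => ?_)
      rw [norm_mul]
      exact mul_le_of_le_one_left (norm_nonneg _) (hfl x)
    exact (pow_le_pow_left₀ (norm_nonneg _) this 2).trans
      (expect_pow_le' _ (fun _ => norm_nonneg _) 2)
  refine chain hK2 (by positivity) hA2 d0.le d1 (norm_nonneg _) (gowers_nonneg N G)
    (norm_nonneg _) ?_ ?_
  · rw [pow_mul]
    refine (pow_le_pow_left₀ (by positivity) cs K1).trans (pet.trans ?_)
    have := gowers_nonneg N G
    rw [div_eq_mul_inv, mul_add]
    exact add_le_add (le_mul_of_one_le_left this hA1') le_rfl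
  · refine chn.trans ?_
    gcongr

end mlem
end Pel



namespace Pel

section final

def Ind {F : Type} [Field F] {k : ℕ} (P : Fin k → F[X]) : Prop :=
  ∀ c : Fin k → F, (∑ i, c i • P i).natDegree = 0 → c = 0

def IndR {F : Type} [Field F] {k : ℕ} (P : Fin k → F[X]) (R : F[X]) : Prop :=
  ∀ (c : Fin k → F) (r : F), (∑ i, c i • P i + r • R).natDegree = 0 → c = 0 ∧ r = 0

lemma IndR.ind {F : Type} [Field F] {k : ℕ} {P : Fin k → F[X]} {R : F[X]} (h : IndR P R) : Ind P :=
  fun c hc => (h c 0 (by simpa using hc)).1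

lemma Ind.indR {F : Type} [Field F] {k : ℕ} {P : Fin (k + 1) → F[X]} (h : Ind P) {φ : F}
    (hφ : φ ≠ 0) : IndR (fun i : Fin k => P i.castSucc) (φ • P (Fin.last k)) := by
  intro c r hc
  have := h (Fin.snoc c (r * φ)) (by
    rw [Fin.sum_univ_castSucc]
    simpa [smul_smul] using hc)
  constructor
  · funext i
    simpa using congrFun this i.castSucc
  · have := congrFun this (Fin.last k)
    simpa [hφ] using this

lemma IndR.indR {F : Type} [Field F] {k : ℕ} {P : Fin (k + 1) → F[X]} {R : F[X]} (h : IndR P R)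
    (φ : F) : IndR (fun i : Fin k => P i.castSucc) (R + φ • P (Fin.last k)) := by
  intro c r hc
  have := h (Fin.snoc c (r * φ)) r (by
    rw [Fin.sum_univ_castSucc]
    have e : ∑ i : Fin k, (Fin.snoc c (r * φ) : Fin (k+1) → F) i.castSucc • P i.castSucc +
      (Fin.snoc c (r * φ) : Fin (k+1) → F) (Fin.last k) • P (Fin.last k) + r • R =
      ∑ i : Fin k, c i • P i.castSucc + r • (R + φ • P (Fin.last k)) := by
      simp [smul_smul]; ring
    rw [e]; exact hc)
  refine ⟨?_, this.2⟩
  funext i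
  simpa using congrFun this.1 i.castSucc

lemma Ind.ne {F : Type} [Field F] {k : ℕ} {P : Fin k → F[X]} (h : Ind P) (i : Fin k) :
    1 ≤ (P i).natDegree := by
  classical
  by_contra hc
  have := h (Pi.single i 1) (by
    rw [Finset.sum_eq_single i]
    · simp; omega
    · intro j _ hj; simp [hj]
    · simp)
  have := congrFun this i
  simp at this

lemma Ind.ne2 {F : Type} [Field F] {k : ℕ} {P : Fin k → F[X]} (h : Ind P) {i j : Fin k}
    (hij : i ≠ j) : 1 ≤ (P i - P j).natDegree := by
  classical
  by_contra hc
  have := h (Pi.single i 1 - Pi.single j 1) (by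
    have : ∑ x, (Pi.single i 1 - Pi.single j 1 : Fin k → F) x • P x = P i - P j := by
      simp [sub_smul, Finset.sum_sub_distrib, Pi.single_apply, ite_smul]
    rw [this]; omega)
  have := congrFun this i
  simp [hij] at this

lemma IndR.ne {F : Type} [Field F] {k : ℕ} {P : Fin k → F[X]} {R : F[X]} (h : IndR P R) (i : Fin k) :
    1 ≤ (P i - R).natDegree := by
  classical
  by_contra hc
  have := h (Pi.single i 1) (-1) (by
    have : ∑ x, (Pi.single i 1 : Fin k → F) x • P x + (-1 : F) • R = P i - R := by
      simp [Pi.single_apply, ite_smul, sub_eq_add_neg]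
    rw [this]; omega)
  simpa using this.2

lemma Tk (d k : ℕ) : ∃ (K : ℕ) (A : ℝ), 1 ≤ K ∧ 0 ≤ A ∧
    ∀ (F : Type) [Field F] [Fintype F] (e : AddChar F ℂ)
      (he : e.IsPrimitive) (hF : CH d F) (P : Fin k → F[X]) (R : F[X])
      (hPd : ∀ i, (P i).natDegree ≤ d) (hR : R.natDegree ≤ d) (hI : IndR P R)
      (f0 : F → ℂ) (f : Fin k → F → ℂ), Bd f0 → (∀ i, Bd (f i)) →
      ‖LamF P f0 f (fun y => e (R.eval y))‖ ^ K ≤ A * dq F := by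
  induction k with
  | zero =>
    refine ⟨2 ^ d, d, Nat.one_le_two_pow, by positivity, ?_⟩
    intro F _ _ e he hF P R hPd hR hI f0 f hf0 hf
    have hR1 : 1 ≤ R.natDegree := by
      by_contra hc
      have := (hI 0 1 (by simp; omega)).2
      simp at this
    obtain ⟨D, hD⟩ : ∃ D, R.natDegree = D + 1 := ⟨R.natDegree - 1, by omega⟩
    have w := weyl e he D (fun j h1 h2 => hF j h1 (by omega)) R hD
    have e1 : LamF P f0 f (fun y => e (R.eval y)) = (𝔼 x, f0 x) * 𝔼 y, e (R.eval y) := by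
      rw [Finset.expect_mul_expect]
      refine ex_congr fun x => ex_congr fun y => ?_
      simp [mul_comm]
    have h1 : ‖LamF P f0 f (fun y => e (R.eval y))‖ ≤ ‖𝔼 y, e (R.eval y)‖ := by
      rw [e1, norm_mul]
      exact mul_le_of_le_one_left (norm_nonneg _) (ex_norm_le_one hf0)
    have h2 : ‖𝔼 y, e (R.eval y)‖ ≤ 1 := ex_norm_le_one fun y => (e_norm _ _).le
    have d0 := dq_pos F
    calc _ ≤ ‖𝔼 y, e (R.eval y)‖ ^ (2 ^ d) := pow_le_pow_left₀ (norm_nonneg _) h1 _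
      _ ≤ ‖𝔼 y, e (R.eval y)‖ ^ (2 ^ D) := pow_le_pow_of_le_one (norm_nonneg _) h2
          (Nat.pow_le_pow_right (by norm_num) (by omega))
      _ ≤ D * dq F := w
      _ ≤ _ := by gcongr; omega
  | succ k ih =>
    obtain ⟨K0, A0, hK0, hA0, ih⟩ := ih
    obtain ⟨K, A, hK, hA, hM⟩ := Mlem d k K0 A0 hK0 hA0
    refine ⟨K * K0, A ^ K0 * 2 ^ K0 * (A0 + 1), Nat.one_le_iff_ne_zero.2 (by positivity),
      by positivity, ?_⟩
    intro F _ _ e he hF P R hPd hR hI f0 f hf0 hf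
    have hsd : ∀ φ : F, (φ • P (Fin.last k)).natDegree ≤ d := fun φ =>
      (natDegree_smul_le _ _).trans (hPd _)
    obtain ⟨φ, hφ⟩ := hM F e he hF (fun i => P i.castSucc) (P (Fin.last k)) R (fun i => hPd _) (hPd _)
      hR (hI.ind.ne _) (fun i => hI.ind.ne2 (Fin.castSucc_lt_last i).ne') (hI.ne _)
      (fun g0 g hg0 hg φ hφ => ih F e he hF _ _ (fun i => hPd _) (hsd φ) (hI.ind.indR hφ) g0 g hg0 hg)
      f0 (f (Fin.last k)) (fun i => f i.castSucc) hf0 (hf _) (fun i => hf _)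
    have h2 := ih F e he hF (fun i => P i.castSucc) (R + φ • P (Fin.last k)) (fun i => hPd _)
      (natDegree_add_le_of_degree_le hR (hsd φ)) (hI.indR φ) (fun x => f0 x * e (φ * x))
      (fun i => f i.castSucc) (fun x => norm_mul_le_one (hf0 _) (e_norm _ _).le) (fun i => hf _)
    have e1 : LamF P f0 f (fun y => e (R.eval y)) = 𝔼 x, 𝔼 y, e (R.eval y) *
          (f0 x * ((∏ i : Fin k, f i.castSucc (x + (P i.castSucc).eval y)) *
            f (Fin.last k) (x + (P (Fin.last k)).eval y))) :=
      ex_congr fun x => ex_congr fun y => by rw [Fin.prod_univ_castSucc]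
    rw [e1]
    have := chain hK0 hA hA0 (dq_pos F).le (dq_le F) (norm_nonneg _) (norm_nonneg _) le_rfl hφ
      (Z := 0) (by simpa using h2)
    simpa using this

lemma Sk' (d k : ℕ) : ∃ (K : ℕ) (A : ℝ), 1 ≤ K ∧ 0 ≤ A ∧
    ∀ (F : Type) [Field F] [Fintype F] (e : AddChar F ℂ)
      (he : e.IsPrimitive) (hF : CH d F) (P : Fin k → F[X])
      (hPd : ∀ i, (P i).natDegree ≤ d) (hI : Ind P)
      (f0 : F → ℂ) (f : Fin k → F → ℂ), Bd f0 → (∀ i, Bd (f i)) →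
      ‖LamF P f0 f (fun y => 1)‖ ^ K ≤ A * (‖𝔼 x, f0 x‖ + dq F) := by
  induction k with
  | zero =>
    refine ⟨1, 1, le_rfl, zero_le_one, ?_⟩
    intro F _ _ e he hF P hPd hI f0 f hf0 hf
    have e1 : LamF P f0 f (fun y => 1) = 𝔼 x, f0 x := by
      refine ex_congr fun x => ?_
      simp [Fintype.expect_const]
    rw [e1]
    have := dq_pos F
    simp only [pow_one, one_mul]
    linarith
  | succ k ih =>
    obtain ⟨K1, A1, hK1, hA1, ih⟩ := ih
    obtain ⟨K0, A0, hK0, hA0, hT⟩ := Tk d k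
    obtain ⟨K, A, hK, hA, hM⟩ := Mlem d k K0 A0 hK0 hA0
    refine ⟨K * (K0 * K1), A ^ (K0 * K1) * 2 ^ (K0 * K1) * (A0 + A1 + 1),
      Nat.one_le_iff_ne_zero.2 (by positivity), by positivity, ?_⟩
    intro F _ _ e he hF P hPd hI f0 f hf0 hf
    have d0 := dq_pos F
    have hsd : ∀ φ : F, (φ • P (Fin.last k)).natDegree ≤ d := fun φ =>
      (natDegree_smul_le _ _).trans (hPd _)
    obtain ⟨φ, hφ⟩ := hM F e he hF (fun i => P i.castSucc) (P (Fin.last k)) 0 (fun i => hPd _) (hPd _)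
      (by simp) (hI.ne _) (fun i => hI.ne2 (Fin.castSucc_lt_last i).ne') (by simpa using hI.ne _)
      (fun g0 g hg0 hg φ hφ => hT F e he hF _ _ (fun i => hPd _) (hsd φ) (hI.indR hφ) g0 g hg0 hg)
      f0 (f (Fin.last k)) (fun i => f i.castSucc) hf0 (hf _) (fun i => hf _)
    have hb1 : Bd (fun x => f0 x * e (φ * x)) := fun x => norm_mul_le_one (hf0 _) (e_norm _ _).le
    have hY1 : ‖LamF (fun i : Fin k => P i.castSucc) (fun x => f0 x * e (φ * x))
        (fun i => f i.castSucc) (fun y => e ((0 + φ • P (Fin.last k)).eval y))‖ ≤ 1 :=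
      LamF_le_one _ hb1 (fun i => hf _) (fun y => (e_norm _ _).le)
    have h2 : ‖LamF (fun i : Fin k => P i.castSucc) (fun x => f0 x * e (φ * x))
        (fun i => f i.castSucc) (fun y => e ((0 + φ • P (Fin.last k)).eval y))‖ ^ (K0 * K1) ≤
        (A0 + A1) * (‖𝔼 x, f0 x‖ + dq F) := by
      have n0 := norm_nonneg (𝔼 x, f0 x)
      by_cases h0 : φ = 0
      · have := ih F e he hF (fun i => P i.castSucc) (fun i => hPd _) (by
          intro c hc
          have := hI (Fin.snoc c 0) (by rw [Fin.sum_univ_castSucc]; simpa using hc)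
          funext i
          simpa using congrFun this i.castSucc) f0 (fun i => f i.castSucc) hf0 (fun i => hf _)
        refine (pow_le_pow_of_le_one (norm_nonneg _) hY1 (Nat.le_mul_of_pos_left K1 hK0)).trans ?_
        subst h0
        simp only [zero_mul, AddChar.map_zero_eq_one, mul_one, zero_smul, add_zero, eval_zero]
        refine this.trans ?_
        gcongr; linarith
      · have := hT F e he hF (fun i => P i.castSucc) (0 + φ • P (Fin.last k)) (fun i => hPd _)
          (by rw [zero_add]; exact hsd φ) (by rw [zero_add]; exact hI.indR h0)
          (fun x => f0 x * e (φ * x)) (fun i => f i.castSucc) hb1 (fun i => hf _)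
        refine (pow_le_pow_of_le_one (norm_nonneg _) hY1 (Nat.le_mul_of_pos_right K0 hK1)).trans ?_
        refine this.trans ?_
        gcongr
        · linarith
        · linarith
    have e1 : LamF P f0 f (fun y => 1) = 𝔼 x, 𝔼 y, e ((0 : F[X]).eval y) *
          (f0 x * ((∏ i : Fin k, f i.castSucc (x + (P i.castSucc).eval y)) *
            f (Fin.last k) (x + (P (Fin.last k)).eval y))) :=
      ex_congr fun x => ex_congr fun y => by rw [Fin.prod_univ_castSucc]; simp
    rw [e1]
    exact chain (Nat.one_le_iff_ne_zero.2 (by positivity)) hA (by positivity) (dq_pos F).le (dq_le F)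
      (norm_nonneg _) (norm_nonneg _) (norm_nonneg _) hφ h2

lemma add_pow_bound {K1 K2 : ℕ} {A1 A2 δ a b : ℝ} (hK1 : 1 ≤ K1) (hK2 : 1 ≤ K2) (hA1 : 0 ≤ A1)
    (hA2 : 0 ≤ A2) (hδ : 0 ≤ δ) (hδ1 : δ ≤ 1) (ha : 0 ≤ a) (hb : 0 ≤ b)
    (h1 : a ^ K1 ≤ A1 * δ) (h2 : b ^ K2 ≤ A2 * δ) :
    (a + b) ^ (K1 * K2) ≤ 2 ^ (K1 * K2) * (A1 ^ K2 + A2 ^ K1) * δ := by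
  have e1 : a ^ (K1 * K2) ≤ A1 ^ K2 * δ := by
    rw [pow_mul]
    refine (pow_le_pow_left₀ (by positivity) h1 _).trans ?_
    rw [mul_pow]; gcongr; exact pow_le_self' hδ hδ1 hK2
  have e2 : b ^ (K1 * K2) ≤ A2 ^ K1 * δ := by
    rw [mul_comm K1, pow_mul]
    refine (pow_le_pow_left₀ (by positivity) h2 _).trans ?_
    rw [mul_pow]; gcongr; exact pow_le_self' hδ hδ1 hK1
  calc _ ≤ 2 ^ (K1 * K2) * (a ^ (K1 * K2) + b ^ (K1 * K2)) := add_pow_le2 ha hb _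
    _ ≤ 2 ^ (K1 * K2) * (A1 ^ K2 * δ + A2 ^ K1 * δ) := by gcongr
    _ = _ := by ring

lemma Sk (d k : ℕ) : ∃ (K : ℕ) (A : ℝ), 1 ≤ K ∧ 0 ≤ A ∧
    ∀ (F : Type) [Field F] [Fintype F] (e : AddChar F ℂ)
      (he : e.IsPrimitive) (hF : CH d F) (P : Fin k → F[X])
      (hPd : ∀ i, (P i).natDegree ≤ d) (hI : Ind P)
      (a : F → ℝ), (∀ x, 0 ≤ a x ∧ a x ≤ 1) →
      ∃ η : ℝ, 0 ≤ η ∧ η ^ K ≤ A * dq F ∧ (𝔼 x, a x) ^ (k + 1) ≤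
        ‖LamF P (fun x => (a x : ℂ)) (fun _ x => (a x : ℂ)) (fun y => 1)‖ + η := by
  induction k with
  | zero =>
    refine ⟨1, 0, le_rfl, le_rfl, ?_⟩
    intro F _ _ e he hF P hPd hI a ha
    refine ⟨0, le_rfl, by simp, ?_⟩
    have e1 : LamF P (fun x => (a x : ℂ)) (fun _ x => (a x : ℂ)) (fun y => 1) =
        ((𝔼 x, a x : ℝ) : ℂ) := by
      rw [Complex.ofReal_expect]
      refine ex_congr fun x => ?_
      simp [Fintype.expect_const]
    rw [e1, Complex.norm_real, Real.norm_of_nonneg (ex_nonneg fun x => (ha x).1)]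
    simp
  | succ k ih =>
    obtain ⟨K1, A1, hK1, hA1, ih⟩ := ih
    obtain ⟨K2, A2, hK2, hA2, hS⟩ := Sk' d (k + 1)
    refine ⟨K1 * K2, 2 ^ (K1 * K2) * (A1 ^ K2 + A2 ^ K1), Nat.one_le_iff_ne_zero.2 (by positivity),
      by positivity, ?_⟩
    intro F _ _ e he hF P hPd hI a ha
    set α := 𝔼 x, a x with hα
    have α0 : 0 ≤ α := ex_nonneg fun x => (ha x).1
    have α1 : α ≤ 1 := ex_le fun x => (ha x).2
    set P' : Fin k → F[X] := fun i => P i.succ - P 0 with hP'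
    have hI' : Ind P' := by
      intro c hc
      have := hI (Fin.cons (- ∑ i, c i) c) (by
        rw [Fin.sum_univ_succ]
        simp only [Fin.cons_zero, Fin.cons_succ]
        convert hc using 2
        simp only [hP', smul_sub, Finset.sum_sub_distrib, neg_smul, Finset.sum_smul]
        ring)
      funext i
      simpa using congrFun this i.succ
    obtain ⟨η1, h1a, h1b, h1c⟩ := ih F e he hF P' (fun i => (natDegree_sub_le _ _).trans
      (max_le (hPd _) (hPd _))) hI' a ha
    have hb : Bd (fun x => ((a x : ℝ) : ℂ)) := fun x => by
      rw [Complex.norm_real, Real.norm_of_nonneg (ha x).1]; exact (ha x).2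
    have hb2 : Bd (fun x => ((a x : ℝ) : ℂ) - α) := fun x => by
      show ‖((a x : ℝ) : ℂ) - (α : ℂ)‖ ≤ 1
      rw [← Complex.ofReal_sub, Complex.norm_real, Real.norm_eq_abs, abs_le]
      have := ha x
      constructor <;> linarith
    set η2 := ‖LamF P (fun x => ((a x : ℝ) : ℂ) - α) (fun _ x => (a x : ℂ)) (fun y => 1)‖ with hη2
    have h2 : η2 ^ K2 ≤ A2 * dq F := by
      have := hS F e he hF P hPd hI (fun x => ((a x : ℝ) : ℂ) - α) (fun _ x => (a x : ℂ)) hb2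
        (fun _ => hb)
      have z : 𝔼 x, (((a x : ℝ) : ℂ) - α) = 0 := by
        rw [Finset.expect_sub_distrib, Fintype.expect_const, hα, Complex.ofReal_expect, sub_self]
      rwa [z, norm_zero, zero_add] at this
    refine ⟨η1 + η2, add_nonneg h1a (norm_nonneg _), add_pow_bound hK1 hK2 hA1 hA2 (dq_pos F).le
      (dq_le F) h1a (norm_nonneg _) h1b h2, ?_⟩
    have e1 : LamF P (fun x => (a x : ℂ)) (fun _ x => (a x : ℂ)) (fun y => 1) =
        LamF P (fun x => ((a x : ℝ) : ℂ) - α) (fun _ x => (a x : ℂ)) (fun y => 1) +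
        α * LamF P' (fun x => (a x : ℂ)) (fun _ x => (a x : ℂ)) (fun y => 1) := by
      have e2 : LamF P' (fun x => (a x : ℂ)) (fun _ x => (a x : ℂ)) (fun y => 1) =
          𝔼 x, 𝔼 y, ∏ i, ((a (x + (P i).eval y) : ℝ) : ℂ) := by
        unfold LamF
        rw [ex_tr _ (fun y => (P 0).eval y)]
        refine ex_congr fun x => ex_congr fun y => ?_
        rw [Fin.prod_univ_succ, one_mul]
        congr 1
        refine Finset.prod_congr rfl fun i _ => ?_
        simp only [hP', eval_sub]
        congr 2; ring
      rw [e2, Finset.mul_expect]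
      unfold LamF
      rw [← Finset.expect_add_distrib]
      refine ex_congr fun x => ?_
      rw [Finset.mul_expect, ← Finset.expect_add_distrib]
      refine ex_congr fun y => ?_
      ring
    have e3 : α * ‖LamF P' (fun x => (a x : ℂ)) (fun _ x => (a x : ℂ)) (fun y => 1)‖ ≤
        ‖LamF P (fun x => (a x : ℂ)) (fun _ x => (a x : ℂ)) (fun y => 1)‖ + η2 := by
      have : (α : ℂ) * LamF P' (fun x => (a x : ℂ)) (fun _ x => (a x : ℂ)) (fun y => 1) =
        LamF P (fun x => (a x : ℂ)) (fun _ x => (a x : ℂ)) (fun y => 1) -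
          LamF P (fun x => ((a x : ℝ) : ℂ) - α) (fun _ x => (a x : ℂ)) (fun y => 1) := by
        rw [e1]; ring
      calc _ = ‖(α : ℂ) * LamF P' (fun x => (a x : ℂ)) (fun _ x => (a x : ℂ)) (fun y => 1)‖ := by
            rw [norm_mul, Complex.norm_real, Real.norm_of_nonneg α0]
        _ ≤ _ := by rw [this]; exact norm_sub_le _ _
    calc α ^ (k + 1 + 1) = α * α ^ (k + 1) := by ring
      _ ≤ α * (‖LamF P' (fun x => (a x : ℂ)) (fun _ x => (a x : ℂ)) (fun y => 1)‖ + η1) := by gcongr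
      _ ≤ _ := by
          have := mul_le_of_le_one_left h1a α1
          linarith

end final
end Pel


namespace Pel
section lastpart

lemma int_dual (m d : ℕ) (P : Fin m → ℤ[X]) (hd : ∀ i, (P i).natDegree ≤ d)
    (hind : LinearIndependent ℚ fun i => (P i).map (Int.castRingHom ℚ)) :
    ∃ (N : ℤ) (b : Fin (d + 1) × Fin m → ℤ), N ≠ 0 ∧
      ∀ i k, ∑ j : Fin (d + 1), (P i).coeff j * b (j, k) = if i = k then N else 0 := by
  have hk : (Fintype.linearCombination ℚ (fun i => (P i).map (Int.castRingHom ℚ))).ker = ⊥ := by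
    rw [LinearMap.ker_eq_bot']
    intro c hc
    funext i
    exact Fintype.linearIndependent_iff.1 hind c
      (by simpa [Fintype.linearCombination_apply] using hc) i
  obtain ⟨g, hg⟩ := LinearMap.exists_leftInverse_of_injective _ hk
  have h1 : ∀ i, g ((P i).map (Int.castRingHom ℚ)) = Pi.single i 1 := by
    intro i
    have := LinearMap.congr_fun hg (Pi.single i 1)
    simpa [Fintype.linearCombination_apply_single] using this
  have h2 : ∀ i, (P i).map (Int.castRingHom ℚ) =
      ∑ j : Fin (d + 1), ((P i).coeff j : ℚ) • (X ^ (j : ℕ) : ℚ[X]) := by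
    intro i
    rw [Polynomial.as_sum_range' ((P i).map (Int.castRingHom ℚ)) (d + 1)
      (lt_of_le_of_lt natDegree_map_le (Nat.lt_succ_of_le (hd i))), Finset.sum_range]
    refine Finset.sum_congr rfl fun j _ => ?_
    rw [coeff_map, ← C_mul_X_pow_eq_monomial, smul_eq_C_mul]
    simp
  have h3 : ∀ i k, ∑ j : Fin (d + 1), ((P i).coeff j : ℚ) * g (X ^ (j : ℕ)) k =
      if i = k then 1 else 0 := by
    intro i k
    have := congrFun (h1 i) k
    rw [h2, map_sum] at this
    simp only [map_smul, Finset.sum_apply, Pi.smul_apply, smul_eq_mul, Pi.single_apply] at this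
    rw [this]
    simp [eq_comm]
  obtain ⟨N, hN⟩ := IsLocalization.exist_integer_multiples_of_finite (nonZeroDivisors ℤ)
    (fun p : Fin (d + 1) × Fin m => (g (X ^ (p.1 : ℕ)) p.2 : ℚ))
  choose b hb using hN
  refine ⟨N, b, nonZeroDivisors.coe_ne_zero N, ?_⟩
  intro i k
  have h4 : ∀ p, (b p : ℚ) = (N : ℤ) * g (X ^ (p.1 : ℕ)) p.2 := by
    intro p
    have := hb p
    simpa using this
  have h5 : ((∑ j : Fin (d + 1), (P i).coeff j * b (j, k) : ℤ) : ℚ) =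
      ((if i = k then (N : ℤ) else 0 : ℤ) : ℚ) := by
    push_cast
    simp only [h4]
    calc _ = ((N : ℤ) : ℚ) * ∑ j : Fin (d + 1), ((P i).coeff j : ℚ) * g (X ^ (j : ℕ)) k := by
          rw [Finset.mul_sum]; exact Finset.sum_congr rfl fun j _ => by ring
      _ = _ := by rw [h3]; split_ifs <;> simp
  exact_mod_cast h5

lemma ind_red (m d : ℕ) (P : Fin m → ℤ[X]) (hP0 : ∀ i, (P i).coeff 0 = 0)
    (N : ℤ) (b : Fin (d + 1) × Fin m → ℤ)
    (hb : ∀ i k, ∑ j : Fin (d + 1), (P i).coeff j * b (j, k) = if i = k then N else 0)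
    (F : Type) [Field F] (hN : (N : F) ≠ 0) :
    Ind (fun i => (P i).map (Int.castRingHom F)) := by
  intro c hc
  have h1 : ∀ j : ℕ, ∑ i, c i * ((P i).coeff j : F) = 0 := by
    intro j
    rcases Nat.eq_zero_or_pos j with rfl | hj
    · simp [hP0]
    · have : (∑ i, c i • (P i).map (Int.castRingHom F)).coeff j = 0 :=
        coeff_eq_zero_of_natDegree_lt (by rw [hc]; exact hj)
      simpa [finset_sum_coeff] using this
  funext k
  have h2 : c k * (N : F) = 0 := by
    calc c k * (N : F) = ∑ i, c i * ((if i = k then N else 0 : ℤ) : F) := by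
          simp
      _ = ∑ i, c i * ((∑ j : Fin (d + 1), (P i).coeff j * b (j, k) : ℤ) : F) := by simp only [hb]
      _ = ∑ j : Fin (d + 1), (∑ i, c i * ((P i).coeff j : F)) * (b (j, k) : F) := by
          push_cast
          simp only [Finset.mul_sum, Finset.sum_mul]
          rw [Finset.sum_comm]
          exact Finset.sum_congr rfl fun j _ => Finset.sum_congr rfl fun i _ => by ring
      _ = 0 := by simp [h1]
  simpa [hN] using h2

lemma exists_prim (F : Type) [Field F] [Fintype F] : ∃ e : AddChar F ℂ, e.IsPrimitive := by
  obtain ⟨e, he⟩ := AddChar.exists_apply_ne_zero.2 (one_ne_zero : (1 : F) ≠ 0)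
  exact ⟨e, AddChar.IsPrimitive.of_ne_one fun h => he (by rw [h]; rfl)⟩

lemma LamF_small {m : ℕ} (F : Type) [Field F] [Fintype F] (P : Fin m → F[X]) (A : Finset F)
    (a : F → ℝ) (ha : ∀ x, 0 ≤ a x ∧ a x ≤ 1) (haA : ∀ x, x ∉ A → a x = 0)
    (hA : ¬ ∃ x y : F, y ≠ 0 ∧ x ∈ A ∧ ∀ i, x + (P i).eval y ∈ A) :
    ‖LamF P (fun x => (a x : ℂ)) (fun _ x => (a x : ℂ)) (fun y => 1)‖ ≤ dq F := by
  classical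
  have hb : ∀ x, ‖((a x : ℝ) : ℂ)‖ ≤ 1 := fun x => by
    rw [Complex.norm_real, Real.norm_of_nonneg (ha x).1]; exact (ha x).2
  have key : ∀ x y, ‖(1 : ℂ) * ((a x : ℂ) * ∏ i, (a (x + (P i).eval y) : ℂ))‖ ≤
      if y = 0 then (1 : ℝ) else 0 := by
    intro x y
    split_ifs with hy
    · rw [one_mul, norm_mul, norm_prod]
      exact mul_le_one₀ (hb x) (Finset.prod_nonneg fun _ _ => norm_nonneg _)
        (Finset.prod_le_one (fun _ _ => norm_nonneg _) fun _ _ => hb _)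
    · have : (a x : ℂ) * ∏ i, (a (x + (P i).eval y) : ℂ) = 0 := by
        by_contra h
        refine hA ⟨x, y, hy, ?_, fun i => ?_⟩
        · by_contra h'
          exact h (by simp [haA x h'])
        · by_contra h'
          exact h (by rw [Finset.prod_eq_zero (Finset.mem_univ i) (by simp [haA _ h']), mul_zero])
      simp [this]
  unfold LamF
  rw [Fintype.expect_eq_sum_div_card, norm_div, Complex.norm_natCast]
  have hq : (0 : ℝ) < Fintype.card F := by exact_mod_cast Fintype.card_pos
  rw [div_le_iff₀ hq]
  refine (norm_sum_le _ _).trans ?_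
  calc _ ≤ ∑ x : F, dq F := by
        refine Finset.sum_le_sum fun x _ => ?_
        rw [Fintype.expect_eq_sum_div_card, norm_div, Complex.norm_natCast, div_le_iff₀ hq]
        refine (norm_sum_le _ _).trans ((Finset.sum_le_sum fun y _ => key x y).trans ?_)
        simp [dq, hq.ne']
    _ = _ := by simp [mul_comm]

end lastpart
end Pel


theorem statement0 (m : ℕ) (P : Fin m → Polynomial ℤ)
    (hP0 : ∀ i, (P i).coeff 0 = 0)
    (hind : LinearIndependent ℚ fun i => (P i).map (Int.castRingHom ℚ)) :
    ∃ c γ C : ℝ, 0 < c ∧ 0 < γ ∧ 0 < C ∧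
      ∀ (F : Type) [Field F] [Fintype F], c ≤ (ringChar F : ℝ) →
        ∀ A : Finset F,
          (¬ ∃ x y : F, y ≠ 0 ∧ x ∈ A ∧ ∀ i, x + Polynomial.aeval y (P i) ∈ A) →
          (A.card : ℝ) ≤ C * (Fintype.card F : ℝ) ^ ((1 : ℝ) - γ) := by
  set d := ∑ i, (P i).natDegree with hd
  have hd' : ∀ i, (P i).natDegree ≤ d := fun i =>
    Finset.single_le_sum (f := fun i => (P i).natDegree) (fun _ _ => Nat.zero_le _)
      (Finset.mem_univ i)
  obtain ⟨N, b, hN, hb⟩ := Pel.int_dual m d P hd' hind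
  obtain ⟨K, B, hK, hB, hS⟩ := Pel.Sk d m
  set J : ℕ := (m + 1) * K with hJ
  have hJ0 : J ≠ 0 := by positivity
  have hJ1 : (0 : ℝ) < J := by exact_mod_cast Nat.pos_of_ne_zero hJ0
  set D : ℝ := 2 ^ K * (1 + B) with hD
  have hD0 : 0 < D := by positivity
  refine ⟨(N.natAbs + d + 1 : ℕ), (J : ℝ)⁻¹, D ^ ((J : ℝ)⁻¹), by positivity, by positivity,
    by positivity, ?_⟩
  intro F _ _ hc A hA
  have hc' : N.natAbs + d + 1 ≤ ringChar F := by exact_mod_cast hc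
  have hNF : (N : F) ≠ 0 := by
    rw [Ne, CharP.intCast_eq_zero_iff F (ringChar F)]
    intro h
    have := Nat.le_of_dvd (Int.natAbs_pos.2 hN) (Int.natCast_dvd.1 h)
    omega
  have hCH : Pel.CH d F := by
    intro j h1 h2 h
    rw [ringChar.spec] at h
    have := Nat.le_of_dvd (by omega) h
    omega
  obtain ⟨e, he⟩ := Pel.exists_prim F
  classical
  set a : F → ℝ := fun x => if x ∈ A then 1 else 0 with ha
  have ha1 : ∀ x, 0 ≤ a x ∧ a x ≤ 1 := by
    intro x; simp only [ha]; split_ifs <;> norm_num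
  obtain ⟨η, h0, h1, h2⟩ := hS F e he hCH (fun i => (P i).map (Int.castRingHom F))
    (fun i => natDegree_map_le.trans (hd' i)) (Pel.ind_red m d P hP0 N b hb F hNF) a ha1
  have h3 := Pel.LamF_small F (fun i => (P i).map (Int.castRingHom F)) A a ha1
    (fun x hx => by simp [ha, hx]) (by
      rintro ⟨x, y, hy, hx, h⟩
      refine hA ⟨x, y, hy, hx, fun i => ?_⟩
      have := h i
      rwa [eval_map, ← algebraMap_int_eq, ← aeval_def] at this)
  have hq : (0 : ℝ) < Fintype.card F := by exact_mod_cast Fintype.card_pos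
  have h4 : Finset.expect Finset.univ a = (A.card : ℝ) / Fintype.card F := by
    rw [Fintype.expect_eq_sum_div_card]
    simp [ha]
  set q : ℝ := (Fintype.card F : ℝ) with hqdef
  have hdq : Pel.dq F = q⁻¹ := rfl
  rw [h4] at h2
  have h5 : ((A.card : ℝ) / q) ^ J ≤ D * q⁻¹ := by
    rw [hJ, pow_mul, ← hdq]
    have p0 := (Pel.dq_pos F).le
    calc (((A.card : ℝ) / q) ^ (m + 1)) ^ K ≤ (Pel.dq F + η) ^ K := by
          gcongr
          linarith
      _ ≤ 2 ^ K * (Pel.dq F ^ K + η ^ K) := Pel.add_pow_le2 p0 h0 K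
      _ ≤ 2 ^ K * (Pel.dq F + B * Pel.dq F) := by
          gcongr
          exact Pel.pow_le_self' p0 (Pel.dq_le F) hK
      _ = D * Pel.dq F := by rw [hD]; ring
  have h6 : (A.card : ℝ) / q ≤ (D * q⁻¹) ^ ((J : ℝ)⁻¹) := by
    calc (A.card : ℝ) / q = (((A.card : ℝ) / q) ^ J) ^ ((J : ℝ)⁻¹) :=
          (Real.pow_rpow_inv_natCast (by positivity) hJ0).symm
      _ ≤ _ := Real.rpow_le_rpow (by positivity) h5 (by positivity)
  rw [div_le_iff₀ hq] at h6
  refine h6.trans (le_of_eq ?_)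
  rw [Real.mul_rpow hD0.le (by positivity), Real.inv_rpow hq.le, Real.rpow_sub hq, Real.rpow_one]
  ring
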